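/- For each positive integer ℓ, the number of primes p ≤ x with p > ℓ and φ(p−ℓ) > φ(p+ℓ) is asymptotic to (1/2)π(x) as x → ∞; that is, #{p ≤ x : p prime, p > ℓ, φ(p−ℓ) > φ(p+ℓ)} / π(x) tends to 1/2 as x tends to infinity. -/

import Mathlib

open Filter Topology

section
namespace PhiDiff
open MeasureTheory

/-- Fejer kernel -/
noncomputable def fej (u : ℝ) : ℝ := 2 * (1 - Real.cos u) / u ^ 2

lemma fej_nonneg (u : ℝ) : 0 ≤ fej u := by
  unfold fej
  have := Real.cos_le_one u
  apply div_nonneg <;> nlinarith [sq_nonneg u]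

lemma fej_le (u : ℝ) : fej u ≤ 5 * (1 + u ^ 2)⁻¹ := by
  by_cases hu : u = 0
  · subst hu; simp [fej]
  have hu2 : 0 < u ^ 2 := by positivity
  unfold fej
  rw [← div_eq_mul_inv, div_le_div_iff₀ hu2 (by positivity)]
  have h1 := Real.one_sub_sq_div_two_le_cos (x := u)
  have h2 := Real.neg_one_le_cos u
  nlinarith

lemma fej_meas : Measurable fej := by unfold fej; fun_prop

lemma fej_integrable : Integrable fej := by
  refine Integrable.mono' (integrable_inv_one_add_sq.const_mul 5) fej_meas.aestronglyMeasurable ?_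
  filter_upwards with u
  rw [Real.norm_of_nonneg (fej_nonneg u)]
  exact fej_le u

lemma fej_integral_pos : 0 < ∫ u, fej u := by
  rw [integral_pos_iff_support_of_nonneg fej_nonneg fej_integrable]
  have : Set.Ioo (1:ℝ) 2 ⊆ Function.support fej := by
    intro u hu
    have h1 : Real.cos u < 1 := by
      have := Real.cos_lt_cos_of_nonneg_of_le_pi (x := 0) (y := u) le_rfl
        (by have := Real.pi_gt_three; linarith [hu.2]) (by linarith [hu.1])
      simpa using this
    have : 0 < fej u := by
      unfold fej
      have := hu.1
      apply div_pos <;> nlinarith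
    exact this.ne'
  refine lt_of_lt_of_le ?_ (measure_mono this)
  simp

noncomputable def tent (T t : ℝ) : ℝ := 1 - |t| / T

lemma tent_cont (T : ℝ) : Continuous (tent T) := by unfold tent; fun_prop

lemma half_tent {T : ℝ} (hT : 0 < T) {c : ℂ} (hc : c ≠ 0) :
    ∫ t in (0:ℝ)..T, (1 - (t:ℂ) / T) * Complex.exp (c * t) =
      (Complex.exp (c * T) - 1) / (T * c ^ 2) - 1 / c := by
  have hT' : (T:ℂ) ≠ 0 := by exact_mod_cast hT.ne'
  have key : ∀ t : ℝ, HasDerivAt (fun t : ℝ => (1 - (t:ℂ) / T) * Complex.exp (c * t) / c +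
      Complex.exp (c * t) / (T * c ^ 2)) ((1 - (t:ℂ) / T) * Complex.exp (c * t)) t := by
    intro t
    have h0 : HasDerivAt (fun t : ℝ => (t:ℂ)) 1 t := Complex.ofRealCLM.hasDerivAt
    have h1 : HasDerivAt (fun t : ℝ => Complex.exp (c * t)) (Complex.exp (c * t) * (c * 1)) t :=
      (h0.const_mul c).cexp
    have h2 : HasDerivAt (fun t : ℝ => (1 - (t:ℂ) / T)) (-(1 / T)) t :=
      (h0.div_const (T:ℂ)).const_sub 1
    convert! ((h2.mul h1).div_const c).add (h1.div_const (T * c ^ 2)) using 1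
    field_simp
    ring
  rw [intervalIntegral.integral_eq_sub_of_hasDerivAt (fun t _ => key t)]
  · simp
    field_simp
    ring
  · apply Continuous.intervalIntegrable
    fun_prop

lemma tent_fourier {T : ℝ} (hT : 0 < T) {w : ℝ} (hw : w ≠ 0) :
    ∫ t in (-T)..T, (tent T t : ℂ) * Complex.exp (Complex.I * w * t) = ((T * fej (T * w) : ℝ) : ℂ) := by
  have hT' : (T:ℂ) ≠ 0 := by exact_mod_cast hT.ne'
  have hw' : (w:ℂ) ≠ 0 := by exact_mod_cast hw
  have hc : (Complex.I * w) ≠ 0 := mul_ne_zero Complex.I_ne_zero hw'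
  have hintg : ∀ a b : ℝ, IntervalIntegrable
      (fun t : ℝ => (tent T t : ℂ) * Complex.exp (Complex.I * w * t)) volume a b := by
    intro a b
    apply Continuous.intervalIntegrable
    have := tent_cont T
    fun_prop
  rw [← intervalIntegral.integral_add_adjacent_intervals (hintg (-T) 0) (hintg 0 T)]
  have e1 : ∫ t in (0:ℝ)..T, (tent T t : ℂ) * Complex.exp (Complex.I * w * t) =
      (Complex.exp ((Complex.I * w) * T) - 1) / (T * (Complex.I * w) ^ 2) - 1 / (Complex.I * w) := by
    rw [← half_tent hT hc]
    apply intervalIntegral.integral_congr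
    intro t ht
    rw [Set.uIcc_of_le hT.le] at ht
    simp [tent, abs_of_nonneg ht.1]
  have e2 : ∫ t in (-T)..0, (tent T t : ℂ) * Complex.exp (Complex.I * w * t) =
      (Complex.exp ((-(Complex.I * w)) * T) - 1) / (T * (-(Complex.I * w)) ^ 2) -
        1 / (-(Complex.I * w)) := by
    rw [← half_tent hT (neg_ne_zero.mpr hc)]
    have := intervalIntegral.integral_comp_neg (a := 0) (b := T)
      (fun t : ℝ => (tent T t : ℂ) * Complex.exp (Complex.I * w * t))
    rw [neg_zero] at this
    rw [← this]
    apply intervalIntegral.integral_congr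
    intro t ht
    rw [Set.uIcc_of_le hT.le] at ht
    simp [tent, abs_of_nonneg ht.1]
  rw [e1, e2]
  have hcos : Complex.exp ((-(Complex.I * w)) * T) + Complex.exp ((Complex.I * w) * T) =
      2 * Complex.cos (T * w) := by
    rw [Complex.two_cos, add_comm]
    congr 2 <;> ring
  unfold fej
  push_cast
  have hI : (Complex.I * w) ^ 2 = - (w:ℂ) ^ 2 := by rw [mul_pow, Complex.I_sq]; ring
  have : (Complex.exp ((-(Complex.I * w)) * T) - 1) / (T * (-(Complex.I * w)) ^ 2) -
        1 / (-(Complex.I * w)) + ((Complex.exp ((Complex.I * w) * T) - 1) / (T * (Complex.I * w) ^ 2)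
         - 1 / (Complex.I * w)) =
      (Complex.exp ((-(Complex.I * w)) * T) + Complex.exp ((Complex.I * w) * T) - 2) /
        (T * (Complex.I * w) ^ 2) := by
    field_simp
    ring
  rw [this, hcos, hI]
  field_simp
  ring

lemma fej_comp_integrable {T : ℝ} (hT : 0 < T) (v : ℝ) :
    Integrable (fun u => T * fej (T * (u - v))) :=
  ((fej_integrable.comp_mul_left' hT.ne').comp_sub_right v).const_mul T

lemma fubini {β : ℝ → ℝ} (hβ : Measurable β) {M : ℝ} (hM : ∀ u, |β u| ≤ M)
    {T : ℝ} (hT : 0 < T) (v : ℝ) {ε : ℝ} (hε : 0 < ε) :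
    ∫ u in Set.Ioi (0:ℝ), ((β u * Real.exp (-ε * u) * (T * fej (T * (u - v))) : ℝ) : ℂ) =
    ∫ t in (-T)..T, (tent T t : ℂ) * Complex.exp (-(Complex.I * v * t)) *
      ∫ u in Set.Ioi (0:ℝ), (β u : ℂ) * Complex.exp (-((ε : ℂ) - Complex.I * t) * u) := by
  have hLT : -T ≤ T := by linarith
  have hF : Integrable (Function.uncurry fun (u t : ℝ) =>
      ((β u * Real.exp (-ε * u) : ℝ) : ℂ) * ((tent T t : ℂ) * Complex.exp (Complex.I * (u - v) * t)))
      ((volume.restrict (Set.Ioi (0:ℝ))).prod (volume.restrict (Set.Ioc (-T) T))) := by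
    have h1 : Integrable (fun u : ℝ => ((β u * Real.exp (-ε * u) : ℝ) : ℂ))
        (volume.restrict (Set.Ioi (0:ℝ))) := by
      apply Integrable.ofReal
      refine Integrable.bdd_mul (c := M) ?_ hβ.aestronglyMeasurable ?_
      · exact integrableOn_exp_mul_Ioi (by linarith) 0
      · filter_upwards with u
        exact hM u
    have h2 : Integrable (fun t : ℝ => (tent T t : ℂ)) (volume.restrict (Set.Ioc (-T) T)) := by
      have : IntervalIntegrable (fun t : ℝ => (tent T t : ℂ)) volume (-T) T := by
        apply Continuous.intervalIntegrable
        have := tent_cont T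
        fun_prop
      exact (intervalIntegrable_iff_integrableOn_Ioc_of_le hLT).mp this
    have h3 := (h1.mul_prod h2).bdd_mul (c := 1)
      (f := fun z : ℝ × ℝ => Complex.exp (Complex.I * (z.1 - v) * z.2))
      (Continuous.aestronglyMeasurable (by fun_prop)) (by
        filter_upwards with z
        have : Complex.I * (z.1 - v) * z.2 = (((z.1 - v) * z.2 : ℝ) : ℂ) * Complex.I := by
          push_cast; ring
        rw [this, Complex.norm_exp_ofReal_mul_I])
    refine h3.congr ?_
    filter_upwards with z
    simp only [Function.uncurry]
    ring
  have hs := integral_integral_swap hF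
  rw [intervalIntegral.integral_of_le hLT]
  calc _ = ∫ u in Set.Ioi (0:ℝ), ∫ t in Set.Ioc (-T) T, ((β u * Real.exp (-ε * u) : ℝ) : ℂ) *
        ((tent T t : ℂ) * Complex.exp (Complex.I * (u - v) * t)) := by
        apply integral_congr_ae
        have hne : ∀ᵐ u : ℝ ∂(volume.restrict (Set.Ioi (0:ℝ))), u ≠ v := by
          apply ae_restrict_of_ae
          exact Measure.ae_ne volume v
        filter_upwards [hne] with u hu
        rw [MeasureTheory.integral_const_mul, ← intervalIntegral.integral_of_le hLT]
        have := tent_fourier hT (sub_ne_zero.mpr hu)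
        push_cast at this ⊢
        rw [this]
    _ = _ := by
        rw [hs]
        apply integral_congr_ae
        filter_upwards with t
        rw [← MeasureTheory.integral_const_mul]
        apply integral_congr_ae
        filter_upwards with u
        push_cast
        have : Complex.exp (Complex.I * (u - v) * t) * Complex.exp (-ε * u) =
            Complex.exp (-(Complex.I * v * t)) * Complex.exp (-((ε : ℂ) - Complex.I * t) * u) := by
          rw [← Complex.exp_add, ← Complex.exp_add]; congr 1; ring
        linear_combination (β u : ℂ) * (tent T t : ℂ) * this

lemma limit_identity {β : ℝ → ℝ} (hβ : Measurable β) {M : ℝ} (hM : ∀ u, |β u| ≤ M)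
    {g : ℂ → ℂ} (hg : ContinuousOn g {s | 0 ≤ s.re})
    (hgβ : ∀ s : ℂ, 0 < s.re → g s = ∫ u in Set.Ioi (0:ℝ), (β u : ℂ) * Complex.exp (-s * u))
    {T : ℝ} (hT : 0 < T) (v : ℝ) :
    ∫ u in Set.Ioi (0:ℝ), ((β u * (T * fej (T * (u - v))) : ℝ) : ℂ) =
    ∫ t in (-T)..T, (tent T t : ℂ) * Complex.exp (-(Complex.I * v * t)) * g (-(Complex.I * t)) := by
  have hM0 : 0 ≤ M := (abs_nonneg _).trans (hM 0)
  have hLT : -T ≤ T := by linarith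
  have hfm := fej_meas
  have l1 : Tendsto (fun ε : ℝ => ∫ u in Set.Ioi (0:ℝ),
      ((β u * Real.exp (-ε * u) * (T * fej (T * (u - v))) : ℝ) : ℂ)) (𝓝[>] 0)
      (𝓝 (∫ u in Set.Ioi (0:ℝ), ((β u * (T * fej (T * (u - v))) : ℝ) : ℂ))) := by
    apply tendsto_integral_filter_of_dominated_convergence (fun u => M * (T * fej (T * (u - v))))
    · filter_upwards with ε
      apply Measurable.aestronglyMeasurable
      fun_prop
    · filter_upwards [self_mem_nhdsWithin] with ε hε
      filter_upwards [ae_restrict_mem measurableSet_Ioi] with u hu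
      have hε : 0 < ε := hε
      have hu : 0 < u := hu
      rw [Complex.norm_real, norm_mul, norm_mul]
      have h1 : ‖T * fej (T * (u - v))‖ = T * fej (T * (u - v)) :=
        Real.norm_of_nonneg (mul_nonneg hT.le (fej_nonneg _))
      rw [h1]
      apply mul_le_mul_of_nonneg_right _ (mul_nonneg hT.le (fej_nonneg _))
      have h2 : ‖Real.exp (-ε * u)‖ ≤ 1 := by
        rw [Real.norm_of_nonneg (Real.exp_pos _).le, Real.exp_le_one_iff]
        nlinarith
      calc ‖β u‖ * ‖Real.exp (-ε * u)‖ ≤ M * 1 :=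
            mul_le_mul (hM u) h2 (norm_nonneg _) hM0
        _ = M := mul_one _
    · exact ((fej_comp_integrable hT v).const_mul M).integrableOn
    · filter_upwards with u
      have : Continuous fun ε : ℝ => ((β u * Real.exp (-ε * u) * (T * fej (T * (u - v))) : ℝ) : ℂ) := by
        fun_prop
      have h := (this.tendsto 0).mono_left (nhdsWithin_le_nhds (s := Set.Ioi 0))
      simpa using h
  have l2 : Tendsto (fun ε : ℝ => ∫ t in (-T)..T, (tent T t : ℂ) *
      Complex.exp (-(Complex.I * v * t)) * g (ε - Complex.I * t)) (𝓝[>] 0)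
      (𝓝 (∫ t in (-T)..T, (tent T t : ℂ) * Complex.exp (-(Complex.I * v * t)) *
        g (-(Complex.I * t)))) := by
    -- bound on compact
    have hK : IsCompact ((fun p : ℝ × ℝ => (p.1 : ℂ) - Complex.I * p.2) ''
        (Set.Icc 0 1 ×ˢ Set.Icc (-T) T)) :=
      (isCompact_Icc.prod isCompact_Icc).image (by fun_prop)
    have hKs : ((fun p : ℝ × ℝ => (p.1 : ℂ) - Complex.I * p.2) ''
        (Set.Icc 0 1 ×ˢ Set.Icc (-T) T)) ⊆ {s : ℂ | 0 ≤ s.re} := by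
      rintro _ ⟨p, hp, rfl⟩
      simpa using hp.1.1
    obtain ⟨C, hC⟩ := hK.exists_bound_of_continuousOn (hg.mono hKs)
    have hcomp : ∀ ε : ℝ, 0 ≤ ε → Continuous fun t : ℝ => g (ε - Complex.I * t) := by
      intro ε hε
      exact hg.comp_continuous (by fun_prop) (fun t => by simpa using hε)
    apply intervalIntegral.tendsto_integral_filter_of_dominated_convergence
      (fun t => |tent T t| * C)
    · filter_upwards [self_mem_nhdsWithin] with ε hε
      apply Continuous.aestronglyMeasurable
      have h1 := hcomp ε (le_of_lt hε)
      have h2 := tent_cont T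
      exact Continuous.mul (by fun_prop) h1
    · have : Set.Ioo (0:ℝ) 1 ∈ 𝓝[>] (0:ℝ) := Ioo_mem_nhdsGT one_pos
      filter_upwards [this] with ε hε
      filter_upwards with t ht
      rw [Set.uIoc_of_le hLT] at ht
      have hb := hC _ ⟨(ε, t), ⟨⟨hε.1.le, hε.2.le⟩, ⟨ht.1.le, ht.2⟩⟩, rfl⟩
      rw [norm_mul, norm_mul, Complex.norm_real]
      have : -(Complex.I * v * t) = ((-(v * t) : ℝ) : ℂ) * Complex.I := by push_cast; ring
      rw [this, Complex.norm_exp_ofReal_mul_I, mul_one]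
      exact mul_le_mul_of_nonneg_left hb (norm_nonneg _)
    · apply Continuous.intervalIntegrable
      have := tent_cont T
      fun_prop
    · filter_upwards with t ht
      apply Tendsto.const_mul
      have hc : ContinuousWithinAt (fun ε : ℝ => g (ε - Complex.I * t)) (Set.Ici 0) 0 := by
        apply ContinuousWithinAt.comp (t := {s : ℂ | 0 ≤ s.re})
        · apply hg; simp
        · apply Continuous.continuousWithinAt; fun_prop
        · intro ε hε; simpa using hε
      have := (hc.mono Set.Ioi_subset_Ici_self).tendsto
      simpa using this
  refine tendsto_nhds_unique l1 (l2.congr' ?_)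
  filter_upwards [self_mem_nhdsWithin] with ε hε
  rw [fubini hβ hM hT v hε]
  apply intervalIntegral.integral_congr
  intro t _
  simp only
  rw [hgβ _ (by simpa using hε)]

lemma kernel_avg {β : ℝ → ℝ} (hβ : Measurable β) {M : ℝ} (hM : ∀ u, |β u| ≤ M)
    {g : ℂ → ℂ} (hg : ContinuousOn g {s | 0 ≤ s.re})
    (hgβ : ∀ s : ℂ, 0 < s.re → g s = ∫ u in Set.Ioi (0:ℝ), (β u : ℂ) * Complex.exp (-s * u))
    {T : ℝ} (hT : 0 < T) :
    Tendsto (fun v => ∫ u in Set.Ioi (0:ℝ), β u * (T * fej (T * (u - v)))) atTop (𝓝 0) := by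
  have hLT : -T ≤ T := by linarith
  have rl := Real.tendsto_integral_exp_smul_cocompact
    (Set.indicator (Set.Ioc (-T) T) fun t : ℝ => (tent T t : ℂ) * g (-(Complex.I * t)))
  have rl2 := (rl.mono_left atTop_le_cocompact).comp
    (tendsto_id.atTop_mul_const (show (0:ℝ) < (2 * Real.pi)⁻¹ by positivity))
  have : Tendsto (fun v : ℝ => ((∫ u in Set.Ioi (0:ℝ), β u * (T * fej (T * (u - v))) : ℝ) : ℂ))
      atTop (𝓝 ((0 : ℝ) : ℂ)) := by
    refine rl2.congr ?_
    intro v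
    have h1 := limit_identity hβ hM hg hgβ hT v
    rw [integral_complex_ofReal] at h1
    rw [h1, intervalIntegral.integral_of_le hLT, ← integral_indicator measurableSet_Ioc]
    simp only [Function.comp]
    apply integral_congr_ae
    filter_upwards with t
    by_cases ht : t ∈ Set.Ioc (-T) T
    · simp only [Set.indicator_of_mem ht]
      rw [Circle.smul_def, Real.fourierChar_apply, smul_eq_mul]
      have : ((2 * Real.pi * -(t * (id v * (2 * Real.pi)⁻¹)) : ℝ) : ℂ) * Complex.I =
        -(Complex.I * v * t) := by
        have hpi : (Real.pi : ℂ) ≠ 0 := by exact_mod_cast Real.pi_ne_zero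
        push_cast
        simp only [id]
        field_simp
      rw [this]; ring
    · simp [Set.indicator_of_notMem ht]
  exact_mod_cast (Complex.continuous_re.tendsto _).comp this

end PhiDiff

end

section
namespace PhiDiff
open MeasureTheory

lemma window_bound {f : ℝ → ℝ} (hf : Measurable f) {M : ℝ} (hM : ∀ u, |f u| ≤ M)
    {δ R T v : ℝ} (hT : 0 < T) (hR : 0 < R)
    (hw : ∀ u, |u - v| ≤ R / T → δ ≤ f u) :
    (δ + M) * (∫ w in (-R)..R, fej w) - M * (∫ w, fej w) ≤ ∫ u, f u * (T * fej (T * (u - v))) := by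
  have hcv : ∫ u, f u * (T * fej (T * (u - v))) = ∫ w, f (v + w / T) * fej w := by
    have h1 := integral_sub_right_eq_self (μ := volume)
      (fun u => f (u + v) * (T * fej (T * u))) v
    simp only [sub_add_cancel] at h1
    rw [h1]
    have h2 := Measure.integral_comp_mul_left (fun w => f (v + w / T) * fej w) T
    have h3 : (fun x => f (v + T * x / T) * fej (T * x)) = fun x => f (x + v) * fej (T * x) := by
      ext x
      rw [mul_div_cancel_left₀ _ hT.ne', add_comm]
    rw [h3, abs_of_pos (inv_pos.mpr hT), smul_eq_mul] at h2
    have h4 : ∫ w, f (v + w / T) * fej w = T * ∫ x, f (x + v) * fej (T * x) := by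
      rw [h2]; field_simp
    rw [h4, ← integral_const_mul]
    congr 1; ext x; ring
  rw [hcv, intervalIntegral.integral_of_le (by linarith), ← integral_indicator measurableSet_Ioc,
    ← integral_const_mul, ← integral_const_mul, ← integral_sub]
  · apply integral_mono
    · exact ((fej_integrable.indicator measurableSet_Ioc).const_mul _).sub (fej_integrable.const_mul _)
    · refine Integrable.bdd_mul (c := M) fej_integrable ?_ ?_
      · apply Measurable.aestronglyMeasurable; fun_prop
      · filter_upwards with u; exact hM _
    · intro w
      simp only
      have h0 := fej_nonneg w
      have h1 := (abs_le.mp (hM (v + w / T))).1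
      by_cases hmem : w ∈ Set.Ioc (-R) R
      · rw [Set.indicator_of_mem hmem]
        have : δ ≤ f (v + w / T) := by
          apply hw
          rw [add_sub_cancel_left, abs_div, abs_of_pos hT]
          apply div_le_div_of_nonneg_right _ hT.le
          exact abs_le.mpr ⟨hmem.1.le, hmem.2⟩
        nlinarith
      · rw [Set.indicator_of_notMem hmem]
        nlinarith
  · exact (fej_integrable.indicator measurableSet_Ioc).const_mul _
  · exact fej_integrable.const_mul _

lemma tauberian {β : ℝ → ℝ} (hβ : Measurable β) {M : ℝ} (hM : ∀ u, |β u| ≤ M)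
    {L : ℝ} (hL : 0 ≤ L) (hslow : ∀ u h, 0 ≤ u → 0 ≤ h → β u - L * h ≤ β (u + h))
    (havg : ∀ T : ℝ, 0 < T →
      Tendsto (fun v => ∫ u in Set.Ioi (0:ℝ), β u * (T * fej (T * (u - v)))) atTop (𝓝 0)) :
    Tendsto β atTop (𝓝 0) := by
  have hM0 : 0 ≤ M := (abs_nonneg _).trans (hM 0)
  rw [Metric.tendsto_atTop]
  intro δ2 hδ2
  obtain ⟨δ, hδ, rfl⟩ : ∃ δ, 0 < δ ∧ δ2 = 2 * δ := ⟨δ2 / 2, by positivity, by ring⟩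
  set I := ∫ u, fej u with hI
  have hIpos : 0 < I := fej_integral_pos
  set η := δ / (L + 1) with hη
  have hηpos : 0 < η := by positivity
  have hLη : L * η ≤ δ := by
    rw [hη, ← mul_div_assoc, div_le_iff₀ (by positivity)]; nlinarith
  set κ := δ * I / (2 * (δ + M)) with hκ
  have hκpos : 0 < κ := by positivity
  obtain ⟨R, hR, hRI⟩ : ∃ R : ℝ, 0 < R ∧ I - κ < ∫ w in (-R)..R, fej w := by
    have := intervalIntegral_tendsto_integral fej_integrable tendsto_neg_atTop_atBot tendsto_id
    have h2 := (this.eventually (lt_mem_nhds (show I - κ < I by linarith))).and (eventually_gt_atTop 0)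
    obtain ⟨R, h, h'⟩ := h2.exists
    exact ⟨R, h', h⟩
  set T := 2 * R / η with hTdef
  have hT : 0 < T := by positivity
  have hRT : R / T = η / 2 := by rw [hTdef]; field_simp
  have hlow : δ * I / 2 < (δ + M) * (∫ w in (-R)..R, fej w) - M * I := by
    have h1 : (δ + M) * (I - κ) < (δ + M) * (∫ w in (-R)..R, fej w) :=
      mul_lt_mul_of_pos_left hRI (by positivity)
    have h2 : (δ + M) * κ = δ * I / 2 := by rw [hκ]; field_simp
    nlinarith
  obtain ⟨V, hV⟩ := Metric.tendsto_atTop.mp (havg T hT) (δ * I / 2) (by positivity)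
  refine ⟨max V 0 + 2 * η, fun u0 hu0 => ?_⟩
  have hVle := le_max_left V 0
  have h0le := le_max_right V 0
  rw [Real.dist_eq, sub_zero]
  set f : ℝ → ℝ := Set.indicator (Set.Ioi 0) β with hf
  have hfm : Measurable f := hβ.indicator measurableSet_Ioi
  have hfM : ∀ u, |f u| ≤ M := by
    intro u
    by_cases hu : u ∈ Set.Ioi (0:ℝ)
    · rw [hf, Set.indicator_of_mem hu]; exact hM u
    · rw [hf, Set.indicator_of_notMem hu]; simpa using hM0
  have hintg : ∀ v, ∫ u in Set.Ioi (0:ℝ), β u * (T * fej (T * (u - v))) =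
      ∫ u, f u * (T * fej (T * (u - v))) := by
    intro v
    rw [← integral_indicator measurableSet_Ioi]
    congr 1; ext u
    by_cases hu : u ∈ Set.Ioi (0:ℝ)
    · rw [hf, Set.indicator_of_mem hu, Set.indicator_of_mem hu]
    · rw [hf, Set.indicator_of_notMem hu, Set.indicator_of_notMem hu, zero_mul]
  by_contra hcon
  push Not at hcon
  rcases le_abs.mp hcon with hpos | hneg
  · have hb := window_bound hfm hfM (δ := δ) hT hR (v := u0 + η / 2) (by
      intro u hu
      rw [hRT, abs_le] at hu
      have hmem : u ∈ Set.Ioi (0:ℝ) := by simp only [Set.mem_Ioi]; linarith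
      rw [hf, Set.indicator_of_mem hmem]
      have := hslow u0 (u - u0) (by linarith) (by linarith)
      rw [add_sub_cancel] at this
      have h2 : L * (u - u0) ≤ L * η := mul_le_mul_of_nonneg_left (by linarith) hL
      linarith)
    have hv := hV (u0 + η / 2) (by linarith)
    rw [Real.dist_eq, sub_zero, hintg] at hv
    have := (abs_lt.mp hv).2
    linarith
  · have hb := window_bound (f := fun u => - f u) hfm.neg (fun u => by rw [abs_neg]; exact hfM u)
      (δ := δ) hT hR (v := u0 - η / 2) (by
      intro u hu
      rw [hRT, abs_le] at hu
      have hmem : u ∈ Set.Ioi (0:ℝ) := by simp only [Set.mem_Ioi]; linarith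
      rw [hf, Set.indicator_of_mem hmem]
      have := hslow u (u0 - u) (by linarith [Set.mem_Ioi.mp hmem]) (by linarith)
      rw [add_sub_cancel] at this
      have h2 : L * (u0 - u) ≤ L * η := mul_le_mul_of_nonneg_left (by linarith) hL
      linarith)
    have hv := hV (u0 - η / 2) (by linarith)
    rw [Real.dist_eq, sub_zero, hintg] at hv
    have h3 := (abs_lt.mp hv).1
    have : ∫ u, -f u * (T * fej (T * (u - (u0 - η / 2)))) =
        - ∫ u, f u * (T * fej (T * (u - (u0 - η / 2)))) := by
      rw [← integral_neg]; congr 1; ext u; ring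
    rw [this] at hb
    linarith

end PhiDiff

end

section
namespace PhiDiff
open MeasureTheory

open ArithmeticFunction.vonMangoldt in
noncomputable def psiAP {Q : ℕ} (a : ZMod Q) (x : ℝ) : ℝ :=
  ∑ k ∈ Finset.Icc 1 ⌊x⌋₊, residueClass a k

open ArithmeticFunction.vonMangoldt

lemma rc_nonneg {Q : ℕ} (a : ZMod Q) (n : ℕ) : 0 ≤ residueClass a n :=
  Set.indicator_nonneg (fun _ _ => ArithmeticFunction.vonMangoldt_nonneg) n

lemma rc_le {Q : ℕ} (a : ZMod Q) (n : ℕ) : residueClass a n ≤ ArithmeticFunction.vonMangoldt n :=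
  Set.indicator_le_self' (fun _ _ => ArithmeticFunction.vonMangoldt_nonneg) n

lemma psiAP_nonneg {Q : ℕ} (a : ZMod Q) (x : ℝ) : 0 ≤ psiAP a x :=
  Finset.sum_nonneg fun _ _ => rc_nonneg a _

lemma psiAP_mono {Q : ℕ} (a : ZMod Q) : Monotone (psiAP a) := by
  intro x y hxy
  apply Finset.sum_le_sum_of_subset_of_nonneg
  · exact Finset.Icc_subset_Icc_right (Nat.floor_mono hxy)
  · intro i _ _; exact rc_nonneg a i

lemma psiAP_le {Q : ℕ} (a : ZMod Q) {x : ℝ} (hx : 0 ≤ x) : psiAP a x ≤ (Real.log 4 + 4) * x := by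
  refine le_trans ?_ (Chebyshev.psi_le_const_mul_self hx)
  unfold psiAP Chebyshev.psi
  have : Finset.Icc 1 ⌊x⌋₊ = Finset.Ioc 0 ⌊x⌋₊ := by ext; simp [Nat.succ_le_iff]
  rw [this]
  exact Finset.sum_le_sum fun i _ => rc_le a i

lemma psiAP_asymp {Q : ℕ} [NeZero Q] {a : ZMod Q} (ha : IsUnit a) :
    Tendsto (fun x => psiAP a x / x) atTop (𝓝 ((Q.totient : ℝ)⁻¹)) := by
  set A : ℝ := (Q.totient : ℝ)⁻¹ with hA
  have hA0 : 0 ≤ A := by positivity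
  set B : ℝ := Real.log 4 + 4 with hB
  have hB0 : 0 ≤ B := by have := Real.log_nonneg (show (1:ℝ) ≤ 4 by norm_num); positivity
  set γ : ℝ → ℝ := fun u => Real.exp (-u) * psiAP a (Real.exp u) with hγ
  have hγm : Measurable γ := by
    have := (psiAP_mono a).measurable
    fun_prop
  have hγ0 : ∀ u, 0 ≤ γ u := fun u => mul_nonneg (Real.exp_pos _).le (psiAP_nonneg a _)
  have hγB : ∀ u, γ u ≤ B := by
    intro u
    have := psiAP_le a (Real.exp_pos u).le
    calc γ u ≤ Real.exp (-u) * (B * Real.exp u) :=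
          mul_le_mul_of_nonneg_left this (Real.exp_pos _).le
      _ = B := by rw [mul_left_comm, ← Real.exp_add]; simp
  set β : ℝ → ℝ := fun u => γ u - A with hβ
  have hβM : ∀ u, |β u| ≤ B + A := by
    intro u
    have h1 := hγ0 u
    have h2 := hγB u
    rw [abs_le]
    constructor <;> simp only [hβ] <;> linarith
  have hβm : Measurable β := hγm.sub_const A
  have hslow : ∀ u h, 0 ≤ u → 0 ≤ h → β u - B * h ≤ β (u + h) := by
    intro u h _ hh
    have h1 : Real.exp (-h) * γ u ≤ γ (u + h) := by
      simp only [hγ]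
      rw [← mul_assoc, ← Real.exp_add]
      have : -h + -u = -(u + h) := by ring
      rw [this]
      apply mul_le_mul_of_nonneg_left _ (Real.exp_pos _).le
      apply psiAP_mono
      apply Real.exp_le_exp.mpr; linarith
    have h2 : 1 - h ≤ Real.exp (-h) := Real.one_sub_le_exp_neg h
    have h3 := hγ0 u
    have h4 := hγB u
    simp only [hβ]
    nlinarith
  set g : ℂ → ℂ := fun s => (LFunctionResidueClassAux a (1 + s) - A) / (1 + s) with hg
  have hgc : ContinuousOn g {s | 0 ≤ s.re} := by
    apply ContinuousOn.div
    · apply ContinuousOn.sub _ continuousOn_const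
      apply (continuousOn_LFunctionResidueClassAux a).comp (by fun_prop)
      intro s hs
      simpa using hs
    · fun_prop
    · intro s hs h
      have := congrArg Complex.re h
      simp at this
      have hs : 0 ≤ s.re := hs
      linarith
  have hgβ : ∀ s : ℂ, 0 < s.re →
      g s = ∫ u in Set.Ioi (0:ℝ), (β u : ℂ) * Complex.exp (-s * u) := by
    intro s hs
    have hs0 : s ≠ 0 := by rintro rfl; simp at hs
    have hs1 : 1 + s ≠ 0 := by
      intro h
      have := congrArg Complex.re h
      simp at this
      linarith
    have e1 := eqOn_LFunctionResidueClassAux ha (show 1 + s ∈ {s : ℂ | 1 < s.re} by simpa using hs)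
    simp only [add_sub_cancel_left] at e1
    have e2 := LSeries_eq_mul_integral_of_nonneg (residueClass a) (r := 1) zero_le_one
      (s := 1 + s) (by simpa using hs) (by
        apply Asymptotics.IsBigO.of_bound B
        filter_upwards with n
        have := psiAP_le a (Nat.cast_nonneg (α := ℝ) n)
        have h0 := psiAP_nonneg a (n : ℝ)
        unfold psiAP at this h0
        rw [Nat.floor_natCast] at this h0
        rw [Real.norm_of_nonneg h0, Real.rpow_one, Real.norm_of_nonneg (Nat.cast_nonneg _)]
        exact this) (rc_nonneg a)
    have e3 : ∫ (t : ℝ) in Set.Ioi 1, (∑ k ∈ Finset.Icc 1 ⌊t⌋₊, ((residueClass a k : ℝ) : ℂ)) *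
        (t : ℂ) ^ (-(1 + s + 1)) = ∫ u in Set.Ioi (0:ℝ), (γ u : ℂ) * Complex.exp (-s * u) := by
      have him : Real.exp '' (Set.Ioi 0) = Set.Ioi 1 := by
        ext x
        constructor
        · rintro ⟨u, hu, rfl⟩; simpa using hu
        · intro hx
          have hx : (1:ℝ) < x := hx
          exact ⟨Real.log x, Real.log_pos hx, Real.exp_log (by linarith)⟩
      rw [← him, integral_image_eq_integral_abs_deriv_smul measurableSet_Ioi
        (fun x _ => (Real.hasDerivAt_exp x).hasDerivWithinAt) Real.exp_injective.injOn]
      apply integral_congr_ae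
      filter_upwards with u
      rw [abs_of_pos (Real.exp_pos u), Complex.real_smul]
      simp only [hγ, psiAP]
      rw [Complex.cpow_def_of_ne_zero (by exact_mod_cast (Real.exp_pos u).ne'),
        ← Complex.ofReal_log (Real.exp_pos u).le, Real.log_exp]
      push_cast
      have : Complex.exp u * Complex.exp (u * (-(1 + s + 1))) =
          Complex.exp (-u) * Complex.exp (-s * u) := by
        rw [← Complex.exp_add, ← Complex.exp_add]; congr 1; ring
      linear_combination (∑ k ∈ Finset.Icc 1 ⌊Real.exp u⌋₊, ((residueClass a k : ℝ) : ℂ)) * this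
    rw [e3] at e2
    have hexp : IntegrableOn (fun u : ℝ => Complex.exp (-s * u)) (Set.Ioi 0) :=
      integrableOn_exp_mul_complex_Ioi (by simpa using hs) 0
    have e4 : ∫ u in Set.Ioi (0:ℝ), (β u : ℂ) * Complex.exp (-s * u) =
        (∫ u in Set.Ioi (0:ℝ), (γ u : ℂ) * Complex.exp (-s * u)) - A / s := by
      have h1 : ∫ u in Set.Ioi (0:ℝ), (A : ℂ) * Complex.exp (-s * u) = A / s := by
        rw [integral_const_mul, integral_exp_mul_complex_Ioi (by simpa using hs)]
        simp
        field_simp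
      rw [← h1, ← integral_sub]
      · congr 1; ext u; simp only [hβ]; push_cast; ring
      · refine Integrable.bdd_mul (c := B) hexp ?_ ?_
        · apply Measurable.aestronglyMeasurable; fun_prop
        · filter_upwards with u
          rw [Complex.norm_real, Real.norm_of_nonneg (hγ0 u)]; exact hγB u
      · exact hexp.const_mul _
    rw [e4, hg]
    simp only
    have hA' : (A : ℂ) = (Q.totient : ℂ)⁻¹ := by rw [hA]; push_cast; rfl
    rw [e1, e2, ← hA']
    field_simp
    ring
  have hlim := tauberian hβm hβM hB0 hslow (fun T hT => kernel_avg hβm hβM hgc hgβ hT)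
  have h2 := (hlim.comp Real.tendsto_log_atTop).add_const A
  rw [zero_add] at h2
  refine h2.congr' ?_
  filter_upwards [eventually_gt_atTop 0] with x hx
  simp only [hβ, hγ, Function.comp, sub_add_cancel]
  rw [Real.exp_neg, Real.exp_log hx]
  field_simp

end PhiDiff

end

section
namespace PhiDiff
open ArithmeticFunction.vonMangoldt

lemma card_primesLE (x : ℕ) : (Nat.primesLE x).card = Nat.primeCounting x := by
  rw [Nat.primeCounting, Nat.primeCounting', Nat.count_eq_card_filter_range,
    Nat.primesLE_eq_filter_range]

open scoped Classical in
/-- primes up to `x` satisfying a predicate -/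
noncomputable def cnt (S : ℕ → Prop) (x : ℕ) : ℕ := ((Nat.primesLE x).filter S).card

lemma cnt_eq (S : ℕ → Prop) [DecidablePred S] (x : ℕ) :
    cnt S x = ((Nat.primesLE x).filter S).card := by
  unfold cnt
  congr

lemma pi_sub_theta : Tendsto (fun x : ℕ =>
    ((Nat.primeCounting x : ℝ) * Real.log x - Chebyshev.theta x) / x) atTop (𝓝 0) := by
  have h1 := Chebyshev.primeCounting_sub_theta_div_log_isBigO
  have h2 : (fun x : ℝ => ((⌊x⌋₊.primeCounting : ℝ) * Real.log x - Chebyshev.theta x) / x)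
      =O[atTop] fun x => (Real.log x)⁻¹ := by
    have h3 := h1.mul (Asymptotics.isBigO_refl (fun x : ℝ => Real.log x / x) atTop)
    refine (h3.congr' ?_ ?_)
    · filter_upwards [eventually_gt_atTop 1] with x hx
      have := Real.log_pos hx
      have : (0:ℝ) < x := by linarith
      field_simp
    · filter_upwards [eventually_gt_atTop 1] with x hx
      have := Real.log_pos hx
      have : (0:ℝ) < x := by linarith
      field_simp
  have h4 := h2.trans_tendsto (Real.tendsto_log_atTop.inv_tendsto_atTop)
  refine (h4.comp tendsto_natCast_atTop_atTop).congr ?_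
  intro n; simp

lemma psi_sub_theta_lim : Tendsto (fun x : ℕ =>
    (Chebyshev.psi x - Chebyshev.theta x) / x) atTop (𝓝 0) := by
  have h : Tendsto (fun x : ℝ => (Chebyshev.psi x - Chebyshev.theta x) / x) atTop (𝓝 0) := by
    have h2 := Chebyshev.isBigO_psi_sub_theta_sqrt.mul
      (Asymptotics.isBigO_refl (fun x : ℝ => x⁻¹) atTop)
    have h3 : Tendsto (fun x : ℝ => √x * x⁻¹) atTop (𝓝 0) := by
      refine (Real.tendsto_sqrt_atTop.inv_tendsto_atTop).congr' ?_
      filter_upwards [eventually_gt_atTop 0] with x hx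
      simp only [Pi.inv_apply]
      have := Real.sq_sqrt hx.le
      have h0 : 0 < √x := Real.sqrt_pos.mpr hx
      field_simp
      linarith
    exact (h2.trans_tendsto h3)
  exact h.comp tendsto_natCast_atTop_atTop

open scoped Classical in
lemma theta_le_psiAP {Q : ℕ} (a : ZMod Q) (x : ℕ) :
    ∑ p ∈ (Nat.primesLE x).filter (fun p : ℕ => (p : ZMod Q) = a), Real.log p ≤ psiAP a x ∧
    psiAP a x - (Chebyshev.psi x - Chebyshev.theta x) ≤
      ∑ p ∈ (Nat.primesLE x).filter (fun p : ℕ => (p : ZMod Q) = a), Real.log p := by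
  have hic : Finset.Ioc 0 x = Finset.Icc 1 x := by ext; simp [Nat.succ_le_iff]
  have e : ∑ p ∈ (Nat.primesLE x).filter (fun p : ℕ => (p : ZMod Q) = a), Real.log p =
      ∑ k ∈ (Finset.Icc 1 x).filter Nat.Prime, residueClass a k := by
    rw [Finset.sum_filter, Nat.primesLE_eq_filter_Icc_one]
    apply Finset.sum_congr rfl
    intro p hp
    have hp := (Finset.mem_filter.mp hp).2
    simp only [residueClass, Set.indicator, Set.mem_ofPred]
    rw [ArithmeticFunction.vonMangoldt_apply_prime hp]
  have hs : psiAP a x = ∑ k ∈ (Finset.Icc 1 x).filter Nat.Prime, residueClass a k +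
      ∑ k ∈ (Finset.Icc 1 x).filter (fun k => ¬ Nat.Prime k), residueClass a k := by
    rw [Finset.sum_filter_add_sum_filter_not, psiAP, Nat.floor_natCast]
  have h0 : 0 ≤ ∑ k ∈ (Finset.Icc 1 x).filter (fun k => ¬ Nat.Prime k), residueClass a k :=
    Finset.sum_nonneg fun _ _ => rc_nonneg a _
  have h1 : ∑ k ∈ (Finset.Icc 1 x).filter (fun k => ¬ Nat.Prime k), residueClass a k ≤
      Chebyshev.psi x - Chebyshev.theta x := by
    rw [Chebyshev.psi_sub_theta_eq_sum_not_prime, Nat.floor_natCast, hic]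
    exact Finset.sum_le_sum fun _ _ => rc_le a _
  rw [e]
  constructor <;> linarith

open scoped Classical in
lemma cnt_bounds {Q : ℕ} (a : ZMod Q) (x : ℕ) :
    ∑ p ∈ (Nat.primesLE x).filter (fun p : ℕ => (p : ZMod Q) = a), Real.log p ≤
      cnt (fun p : ℕ => (p : ZMod Q) = a) x * Real.log x ∧
    cnt (fun p : ℕ => (p : ZMod Q) = a) x * Real.log x ≤
    ∑ p ∈ (Nat.primesLE x).filter (fun p : ℕ => (p : ZMod Q) = a), Real.log p +
      (Nat.primeCounting x * Real.log x - Chebyshev.theta x) := by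
  have hle : ∀ p ∈ Nat.primesLE x, 0 ≤ Real.log x - Real.log p := by
    intro p hp
    have := Nat.mem_primesLE.mp hp
    rw [sub_nonneg]
    apply Real.log_le_log
    · exact_mod_cast this.2.pos
    · exact_mod_cast this.1
  have e1 : cnt (fun p : ℕ => (p : ZMod Q) = a) x * Real.log x -
      ∑ p ∈ (Nat.primesLE x).filter (fun p : ℕ => (p : ZMod Q) = a), Real.log p =
      ∑ p ∈ (Nat.primesLE x).filter (fun p : ℕ => (p : ZMod Q) = a), (Real.log x - Real.log p) := by
    rw [Finset.sum_sub_distrib, Finset.sum_const, nsmul_eq_mul, cnt_eq]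
  have e2 : Nat.primeCounting x * Real.log x - Chebyshev.theta x =
      ∑ p ∈ (Nat.primesLE x), (Real.log x - Real.log p) := by
    rw [Finset.sum_sub_distrib, Finset.sum_const, nsmul_eq_mul, card_primesLE,
      Chebyshev.theta_eq_sum_primesLE_log]
  have h1 := Finset.sum_nonneg (s := (Nat.primesLE x).filter (fun p : ℕ => (p : ZMod Q) = a))
    (f := fun p : ℕ => Real.log x - Real.log p) (fun p hp => hle p (Finset.mem_filter.mp hp).1)
  have h2 := Finset.sum_le_sum_of_subset_of_nonneg
    (Finset.filter_subset (fun p : ℕ => (p : ZMod Q) = a) (Nat.primesLE x))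
    (f := fun p : ℕ => Real.log x - Real.log p) (fun p hp _ => hle p hp)
  constructor <;> linarith

lemma cnt_asymp {Q : ℕ} [NeZero Q] {a : ZMod Q} (ha : IsUnit a) :
    Tendsto (fun x : ℕ => (cnt (fun p : ℕ => (p : ZMod Q) = a) x : ℝ) * Real.log x / x) atTop
      (𝓝 ((Q.totient : ℝ)⁻¹)) := by
  have h := (psiAP_asymp ha).comp tendsto_natCast_atTop_atTop (α := ℕ)
  have l1 := h.sub psi_sub_theta_lim
  have l2 := h.add pi_sub_theta
  rw [sub_zero] at l1
  rw [add_zero] at l2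
  refine tendsto_of_tendsto_of_tendsto_of_le_of_le l1 l2 ?_ ?_
  · intro x
    simp only [Function.comp]
    rw [← sub_div]
    have h1 := theta_le_psiAP a x
    have h2 := cnt_bounds a x
    apply div_le_div_of_nonneg_right _ (Nat.cast_nonneg _)
    linarith
  · intro x
    simp only [Function.comp]
    rw [← add_div]
    have h1 := theta_le_psiAP a x
    have h2 := cnt_bounds a x
    apply div_le_div_of_nonneg_right _ (Nat.cast_nonneg _)
    linarith

lemma pnt : Tendsto (fun x : ℕ => (Nat.primeCounting x : ℝ) * Real.log x / x) atTop (𝓝 1) := by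
  have h := cnt_asymp (Q := 1) (a := 1) isUnit_one
  simp only [Nat.totient_one, Nat.cast_one, inv_one] at h
  refine h.congr ?_
  intro x
  have : cnt (fun p : ℕ => (p : ZMod 1) = 1) x = Nat.primeCounting x := by
    rw [cnt_eq, ← card_primesLE]
    congr 1
    ext p
    rw [Finset.mem_filter]
    exact and_iff_left (Subsingleton.elim _ _)
  rw [this]

lemma pi_atTop : Tendsto (fun x : ℕ => (Nat.primeCounting x : ℝ)) atTop atTop :=
  tendsto_natCast_atTop_atTop.comp Nat.tendsto_primeCounting

lemma dens_AP {Q : ℕ} [NeZero Q] {a : ZMod Q} (ha : IsUnit a) :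
    Tendsto (fun x : ℕ => (cnt (fun p : ℕ => (p : ZMod Q) = a) x : ℝ) / Nat.primeCounting x) atTop
      (𝓝 ((Q.totient : ℝ)⁻¹)) := by
  have h := (cnt_asymp ha).div pnt one_ne_zero
  rw [div_one] at h
  refine h.congr' ?_
  filter_upwards [eventually_gt_atTop 1] with x hx
  have h1 : 0 < Real.log x := Real.log_pos (by exact_mod_cast hx)
  have h2 : (0:ℝ) < x := by positivity
  simp only [Pi.div_apply]
  by_cases hp : (Nat.primeCounting x : ℝ) = 0
  · simp [hp]
  · field_simp

open scoped Classical in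
lemma dens_set {Q : ℕ} [NeZero Q] (S : ZMod Q → Prop) :
    Tendsto (fun x : ℕ => (cnt (fun p : ℕ => S (p : ZMod Q)) x : ℝ) / Nat.primeCounting x) atTop
      (𝓝 (((Finset.univ.filter (fun u : (ZMod Q)ˣ => S u)).card : ℝ) / Q.totient)) := by
  set U := Finset.univ.filter (fun u : (ZMod Q)ˣ => S u) with hU
  have l1 : Tendsto (fun x : ℕ => ∑ u ∈ U,
      (cnt (fun p : ℕ => (p : ZMod Q) = u) x : ℝ) / Nat.primeCounting x) atTop
      (𝓝 (∑ u ∈ U, (Q.totient : ℝ)⁻¹)) :=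
    tendsto_finsetSum _ fun u _ => dens_AP u.isUnit
  rw [Finset.sum_const, nsmul_eq_mul, ← div_eq_mul_inv] at l1
  have l2 : Tendsto (fun x : ℕ => ((Q : ℝ) + 1) / Nat.primeCounting x) atTop (𝓝 0) :=
    tendsto_const_nhds.div_atTop pi_atTop
  have l3 := l1.add l2
  rw [add_zero] at l3
  have hsub : ∀ x, (U.biUnion fun u => (Nat.primesLE x).filter (fun p : ℕ => (p : ZMod Q) = u)) ⊆
      (Nat.primesLE x).filter (fun p : ℕ => S (p : ZMod Q)) := by
    intro x p hp
    simp only [Finset.mem_biUnion, Finset.mem_filter, hU] at hp ⊢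
    obtain ⟨u, ⟨_, hu⟩, hp, hpu⟩ := hp
    exact ⟨hp, hpu ▸ hu⟩
  have hcard : ∀ x, (U.biUnion fun u => (Nat.primesLE x).filter (fun p : ℕ => (p : ZMod Q) = u)).card =
      ∑ u ∈ U, cnt (fun p : ℕ => (p : ZMod Q) = u) x := by
    intro x
    rw [Finset.card_biUnion]
    · exact Finset.sum_congr rfl fun u _ => (cnt_eq _ x).symm
    · intro u _ v _ huv
      simp only [Function.onFun]
      rw [Finset.disjoint_left]
      intro p hp hp'
      have h1 := (Finset.mem_filter.mp hp).2
      have h2 := (Finset.mem_filter.mp hp').2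
      exact huv (Units.ext (h1.symm.trans h2))
  have hsup : ∀ x, (Nat.primesLE x).filter (fun p : ℕ => S (p : ZMod Q)) ⊆
      (U.biUnion fun u => (Nat.primesLE x).filter (fun p : ℕ => (p : ZMod Q) = u)) ∪
        Finset.range (Q + 1) := by
    intro x p hp
    rw [Finset.mem_filter] at hp
    rw [Finset.mem_union]
    by_cases hu : IsUnit (p : ZMod Q)
    · left
      obtain ⟨u, hu⟩ := hu
      simp only [Finset.mem_biUnion, Finset.mem_filter, hU]
      exact ⟨u, ⟨Finset.mem_univ _, hu ▸ hp.2⟩, hp.1, hu.symm⟩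
    · right
      rw [ZMod.isUnit_iff_coprime] at hu
      have hpp := (Nat.mem_primesLE.mp hp.1).2
      have := (Nat.Prime.dvd_iff_not_coprime hpp).mpr hu
      have := Nat.le_of_dvd (Nat.pos_of_ne_zero (NeZero.ne Q)) this
      simp; omega
  refine tendsto_of_tendsto_of_tendsto_of_le_of_le l1 l3 ?_ ?_
  · intro x
    simp only
    rw [← Finset.sum_div]
    apply div_le_div_of_nonneg_right _ (Nat.cast_nonneg _)
    have := Finset.card_le_card (hsub x)
    rw [hcard] at this
    rw [cnt]
    exact_mod_cast this
  · intro x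
    simp only
    rw [← Finset.sum_div, ← add_div]
    apply div_le_div_of_nonneg_right _ (Nat.cast_nonneg _)
    have := (Finset.card_le_card (hsup x)).trans (Finset.card_union_le _ _)
    rw [hcard, Finset.card_range] at this
    rw [cnt]
    exact_mod_cast this

end PhiDiff

end

section
namespace PhiDiff

noncomputable def wt (q : ℕ) : ℝ := -Real.log (1 - 1 / (q : ℝ))

def XX (l q : ℕ) (n : ℤ) : ℤ :=
  (if (q : ℤ) ∣ n + l then 1 else 0) - (if (q : ℤ) ∣ n - l then 1 else 0)

noncomputable def DD (l : ℕ) (P : Finset ℕ) (n : ℤ) : ℝ := ∑ q ∈ P, (XX l q n : ℝ) * wt q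

lemma XX_congr {l q : ℕ} {m n : ℤ} (h : (m : ZMod q) = n) : XX l q m = XX l q n := by
  have key : ∀ c : ℤ, ((q : ℤ) ∣ m + c ↔ (q : ℤ) ∣ n + c) := by
    intro c
    rw [← ZMod.intCast_zmod_eq_zero_iff_dvd, ← ZMod.intCast_zmod_eq_zero_iff_dvd]
    push_cast
    rw [h]
  unfold XX
  rw [sub_eq_add_neg m, sub_eq_add_neg n]
  simp only [key]

lemma XX_neg (l q : ℕ) (n : ℤ) : XX l q (-n) = - XX l q n := by
  have h1 : ((q : ℤ) ∣ -n + l ↔ (q : ℤ) ∣ n - l) := by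
    rw [← dvd_neg]; congr! 1; ring
  have h2 : ((q : ℤ) ∣ -n - l ↔ (q : ℤ) ∣ n + l) := by
    rw [← dvd_neg]; congr! 1; ring
  unfold XX
  simp only [h1, h2]; ring

lemma DD_neg (l : ℕ) (P : Finset ℕ) (n : ℤ) : DD l P (-n) = - DD l P n := by
  unfold DD
  rw [← Finset.sum_neg_distrib]
  refine Finset.sum_congr rfl fun q _ => ?_
  rw [XX_neg]; push_cast; ring

def iv {Q : ℕ} (u : (ZMod Q)ˣ) : ℤ := ((u : ZMod Q).cast : ℤ)

lemma iv_cast {Q : ℕ} (u : (ZMod Q)ˣ) : ((iv u : ℤ) : ZMod Q) = u := by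
  unfold iv; simp

lemma iv_map {q Q : ℕ} (h : q ∣ Q) (u : (ZMod Q)ˣ) :
    ((iv u : ℤ) : ZMod q) = ((ZMod.unitsMap h u : (ZMod q)ˣ) : ZMod q) := by
  rw [ZMod.unitsMap_val]; unfold iv; rw [ZMod.intCast_cast]

lemma DD_congr {l : ℕ} {P : Finset ℕ} {m n : ℤ} (h : ∀ q ∈ P, (m : ZMod q) = n) :
    DD l P m = DD l P n := by
  unfold DD
  exact Finset.sum_congr rfl fun q hq => by rw [XX_congr (h q hq)]

lemma cast_of_dvd {q Q : ℕ} (h : q ∣ Q) {m n : ℤ} (e : (m : ZMod Q) = n) :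
    (m : ZMod q) = n := by
  rw [ZMod.intCast_eq_intCast_iff_dvd_sub] at *
  exact dvd_trans (by exact_mod_cast h) e

lemma DD_iv_map {l Q R : ℕ} {P : Finset ℕ} (hP : ∀ q ∈ P, q ∣ Q) (h : Q ∣ R) (u : (ZMod R)ˣ) :
    DD l P (iv u) = DD l P (iv (ZMod.unitsMap h u)) := by
  refine DD_congr fun q hq => ?_
  refine cast_of_dvd (hP q hq) ?_
  rw [iv_cast, iv_map h]

/-- linear independence -/
lemma prod_val (q : ℕ) (hq : q.Prime) (P : Finset ℕ) (hP : ∀ r ∈ P, r.Prime ∧ r < q) (c : ℕ → ℤ) :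
    (∏ r ∈ P, ((r - 1 : ℚ) / r) ^ c r) ≠ 0 ∧
    padicValRat q (∏ r ∈ P, ((r - 1 : ℚ) / r) ^ c r) = 0 := by
  have := Fact.mk hq
  induction P using Finset.induction_on with
  | empty => simp
  | insert r P hr ih =>
    obtain ⟨h1, h2⟩ := ih fun s hs => hP s (Finset.mem_insert_of_mem hs)
    obtain ⟨hrp, hrq⟩ := hP r (Finset.mem_insert_self _ _)
    have hr0 : (r : ℚ) ≠ 0 := by exact_mod_cast hrp.ne_zero
    have e : (r - 1 : ℚ) = ((r - 1 : ℕ) : ℚ) := by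
      rw [Nat.cast_sub hrp.one_le]; simp
    have hr1 : (((r - 1 : ℕ) : ℚ)) ≠ 0 := by
      have := hrp.two_le
      exact_mod_cast (by omega : r - 1 ≠ 0)
    have h3 : ((r - 1 : ℚ) / r) ^ c r ≠ 0 := zpow_ne_zero _ (by rw [e]; exact div_ne_zero hr1 hr0)
    rw [Finset.prod_insert hr]
    refine ⟨mul_ne_zero h3 h1, ?_⟩
    rw [padicValRat.mul h3 h1, h2, padicValRat.zpow, e, padicValRat.div hr1 hr0,
      padicValRat.of_nat, padicValRat.of_nat, padicValNat.eq_zero_of_not_dvd,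
      padicValNat.eq_zero_of_not_dvd]
    · simp
    · exact Nat.not_dvd_of_pos_of_lt hrp.pos hrq
    · have := hrp.two_le
      exact Nat.not_dvd_of_pos_of_lt (by omega) (by omega)

lemma exp_sum (P : Finset ℕ) (hP : ∀ r ∈ P, r.Prime) (c : ℕ → ℤ) :
    Real.exp (-∑ r ∈ P, (c r : ℝ) * wt r) = ((∏ r ∈ P, ((r - 1 : ℚ) / r) ^ c r : ℚ) : ℝ) := by
  rw [← Finset.sum_neg_distrib, Real.exp_sum]
  push_cast
  refine Finset.prod_congr rfl fun r hr => ?_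
  have h2 : (2 : ℝ) ≤ r := by exact_mod_cast (hP r hr).two_le
  have e : (1 : ℝ) - 1 / r = (r - 1) / r := by field_simp
  have : 0 < ((r : ℝ) - 1) / r := div_pos (by linarith) (by linarith)
  unfold wt
  rw [e, mul_neg, neg_neg, mul_comm, Real.exp_mul, Real.exp_log this, Real.rpow_intCast]

lemma indep (q : ℕ) (hq : q.Prime) (P : Finset ℕ) (hP : ∀ r ∈ P, r.Prime ∧ r < q) (c : ℕ → ℤ)
    (h : (c q : ℝ) * wt q + ∑ r ∈ P, (c r : ℝ) * wt r = 0) : c q = 0 := by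
  have := Fact.mk hq
  have hqP : q ∉ P := fun hh => lt_irrefl _ (hP q hh).2
  have h1 := exp_sum (insert q P) (by
    intro r hr
    rcases Finset.mem_insert.1 hr with rfl | hr
    · exact hq
    · exact (hP r hr).1) c
  rw [Finset.sum_insert hqP, h, neg_zero, Real.exp_zero] at h1
  have h2 : (1 : ℚ) = (∏ r ∈ insert q P, ((r - 1 : ℚ) / r) ^ c r : ℚ) := by exact_mod_cast h1
  rw [Finset.prod_insert hqP] at h2
  obtain ⟨h3, h4⟩ := prod_val q hq P hP c
  have hr0 : (q : ℚ) ≠ 0 := by exact_mod_cast hq.ne_zero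
  have e : (q - 1 : ℚ) = ((q - 1 : ℕ) : ℚ) := by
    rw [Nat.cast_sub hq.one_le]; simp
  have h2q := hq.two_le
  have hr1 : (((q - 1 : ℕ) : ℚ)) ≠ 0 := by
    exact_mod_cast (by omega : q - 1 ≠ 0)
  have h5 : ((q - 1 : ℚ) / q) ^ c q ≠ 0 := zpow_ne_zero _ (by rw [e]; exact div_ne_zero hr1 hr0)
  have h6 := congrArg (padicValRat q) h2
  rw [padicValRat.mul h5 h3, h4, padicValRat.zpow, e, padicValRat.div hr1 hr0,
      padicValRat.of_nat, padicValRat.of_nat, padicValNat.eq_zero_of_not_dvd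
      (Nat.not_dvd_of_pos_of_lt (by omega) (by omega)), padicValNat_self] at h6
  simp at h6
  exact h6

lemma indep2 (l q : ℕ) (hq : q.Prime) (P : Finset ℕ) (hP : ∀ r ∈ P, r.Prime ∧ r < q) (m n : ℤ)
    (h : DD l (insert q P) m = DD l (insert q P) n) : XX l q m = XX l q n := by
  have hqP : q ∉ P := fun hh => lt_irrefl _ (hP q hh).2
  have := indep q hq P hP (fun r => XX l r m - XX l r n) (by
    unfold DD at h
    rw [← sub_eq_zero, ← Finset.sum_sub_distrib, Finset.sum_insert hqP] at h
    rw [← h]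
    push_cast
    congr 1
    · ring
    · exact Finset.sum_congr rfl fun r _ => by ring)
  exact sub_eq_zero.1 this

open scoped Classical in
lemma fiber_count {q Q : ℕ} [NeZero q] [NeZero Q] [NeZero (q * Q)] (hc : q.Coprime Q)
    (F : Finset (ZMod (q * Q))ˣ) (A : Finset (ZMod q)ˣ) (B : (ZMod q)ˣ → Finset (ZMod Q)ˣ) (K : ℝ)
    (hA : ∀ u ∈ F, ZMod.unitsMap (Dvd.intro _ rfl) u ∈ A)
    (hB : ∀ u ∈ F, ZMod.unitsMap (Dvd.intro_left _ rfl) u ∈ B (ZMod.unitsMap (Dvd.intro _ rfl) u))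
    (hK : ∀ a ∈ A, ((B a).card : ℝ) ≤ K) : (F.card : ℝ) ≤ A.card * K := by
  rw [Finset.card_eq_sum_card_fiberwise (f := ZMod.unitsMap (Dvd.intro Q rfl : q ∣ q * Q)) (t := A) hA]
  push_cast
  rw [← nsmul_eq_mul]
  refine Finset.sum_le_card_nsmul _ _ _ fun a ha => le_trans ?_ (hK a ha)
  norm_cast
  refine Finset.card_le_card_of_injOn (ZMod.unitsMap (Dvd.intro_left q rfl : Q ∣ q * Q)) ?_ ?_
  · intro u hu
    simp only [Finset.coe_filter, Set.mem_setOf_eq] at hu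
    have := hB u hu.1
    rw [hu.2] at this
    exact this
  · intro u hu v hv huv
    simp only [Finset.coe_filter, Set.mem_setOf_eq] at hu hv
    have h1 : ZMod.unitsMap (Dvd.intro Q rfl : q ∣ q * Q) u = ZMod.unitsMap (Dvd.intro Q rfl : q ∣ q * Q) v := by
      rw [hu.2, hv.2]
    have h1' := congrArg (fun z : (ZMod q)ˣ => (z : ZMod q)) h1
    have h2' := congrArg (fun z : (ZMod Q)ˣ => (z : ZMod Q)) huv
    simp only [← iv_map] at h1' h2'
    rw [ZMod.intCast_eq_intCast_iff_dvd_sub] at h1' h2'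
    have h3 : ((q * Q : ℕ) : ℤ) ∣ iv v - iv u := by
      push_cast
      exact IsCoprime.mul_dvd (Nat.isCoprime_iff_coprime.2 hc) h1' h2'
    rw [← ZMod.intCast_eq_intCast_iff_dvd_sub, iv_cast, iv_cast] at h3
    exact Units.ext h3

end PhiDiff

end

section
namespace PhiDiff

noncomputable def QQ (P : Finset ℕ) : ℕ := ∏ q ∈ P, q

open scoped Classical in
noncomputable def num (l : ℕ) (P : Finset ℕ) (Q : ℕ) [NeZero Q] (S : ℝ → Prop) : ℕ :=
  (Finset.univ.filter (fun u : (ZMod Q)ˣ => S (DD l P (iv u)))).card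

lemma QQ_insert {q : ℕ} {P : Finset ℕ} (hq : q ∉ P) : QQ (insert q P) = q * QQ P :=
  Finset.prod_insert hq

lemma QQ_coprime {q : ℕ} {P : Finset ℕ} (hq : q.Prime) (hP : ∀ r ∈ P, r.Prime) (h : q ∉ P) :
    q.Coprime (QQ P) := by
  refine Nat.Coprime.prod_right fun r hr => ?_
  exact (Nat.coprime_primes hq (hP r hr)).2 (by rintro rfl; exact h hr)

lemma QQ_ne {P : Finset ℕ} (hP : ∀ r ∈ P, r.Prime) : QQ P ≠ 0 :=
  Finset.prod_ne_zero_iff.2 fun r hr => (hP r hr).ne_zero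

lemma DD_insert {l q : ℕ} {P : Finset ℕ} (hq : q ∉ P) (n : ℤ) :
    DD l (insert q P) n = (XX l q n : ℝ) * wt q + DD l P n := Finset.sum_insert hq

def PM (l : ℕ) (P : Finset ℕ) (κ : ℝ) : Prop :=
  ∀ (Q : ℕ) [NeZero Q], Q = QQ P → ∀ t : ℝ, (num l P Q (fun d => d = t) : ℝ) ≤ κ * Q.totient

def Bd (l : ℕ) (P : Finset ℕ) (ε κ : ℝ) : Prop :=
  ∀ (Q : ℕ) [NeZero Q], Q = QQ P → ∀ t : ℝ, (num l P Q (fun d => |d - t| ≤ ε) : ℝ) ≤ κ * Q.totient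

lemma dvd_QQ {P : Finset ℕ} : ∀ q ∈ P, q ∣ QQ P := fun _ hq => Finset.dvd_prod_of_mem _ hq

open scoped Classical in
lemma num_insert {l q : ℕ} {P : Finset ℕ} (hq : q.Prime) (hP : ∀ r ∈ P, r.Prime) (h : q ∉ P)
    (S : ℝ → Prop) (A : Finset (ZMod q)ˣ) [NeZero (QQ P)] [NeZero (QQ (insert q P))]
    (hA : ∀ u : (ZMod (QQ (insert q P)))ˣ, S (DD l (insert q P) (iv u)) →
      ∀ a : (ZMod q)ˣ, (a : ZMod q) = (iv u : ZMod q) → a ∈ A) (K : ℝ)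
    (hK : ∀ x : ℤ, (num l P (QQ P) (fun d => S (x * wt q + d)) : ℝ) ≤ K) :
    (num l (insert q P) (QQ (insert q P)) S : ℝ) ≤ A.card * K := by
  have : NeZero q := ⟨hq.ne_zero⟩
  have key : ∀ (R : ℕ) [NeZero R] (hR : R = q * QQ P) (hA' : ∀ u : (ZMod R)ˣ, S (DD l (insert q P) (iv u)) →
      ∀ a : (ZMod q)ˣ, (a : ZMod q) = (iv u : ZMod q) → a ∈ A),
      (num l (insert q P) R S : ℝ) ≤ A.card * K := by
    intro R _ hR hA'
    subst hR
    unfold num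
    refine fiber_count (QQ_coprime hq hP h) _ A
      (fun a => Finset.univ.filter (fun u : (ZMod (QQ P))ˣ =>
        S ((XX l q (iv a) : ℝ) * wt q + DD l P (iv u)))) K ?_ ?_ ?_
    · intro u hu
      simp only [Finset.mem_filter, Finset.mem_univ, true_and] at hu
      exact hA' u hu _ (iv_map _ _).symm
    · intro u hu
      simp only [Finset.mem_filter, Finset.mem_univ, true_and] at hu ⊢
      rw [DD_insert h, DD_iv_map dvd_QQ (Dvd.intro_left q rfl : QQ P ∣ q * QQ P) u] at hu
      rw [XX_congr (n := iv u)]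
      · exact hu
      · rw [iv_cast, iv_map]
    · intro a _
      exact hK _
  exact key _ (QQ_insert h) hA

lemma tot_insert {q : ℕ} {P : Finset ℕ} (hq : q.Prime) (hP : ∀ r ∈ P, r.Prime) (h : q ∉ P) :
    ((QQ (insert q P)).totient : ℝ) = (q - 1) * (QQ P).totient := by
  rw [QQ_insert h, Nat.totient_mul (QQ_coprime hq hP h), Nat.totient_prime hq]
  push_cast
  rw [Nat.cast_sub hq.one_le]; simp

lemma PM_step {l q : ℕ} {P : Finset ℕ} (hq : q.Prime) (hql : ¬ q ∣ 2 * l)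
    (hP : ∀ r ∈ P, r.Prime ∧ r < q) {κ : ℝ} (hκ : 0 ≤ κ) (h : PM l P κ) :
    PM l (insert q P) (κ * (1 - 1 / q)) := by
  classical
  intro Q _ hQ t
  subst hQ
  have hqP : q ∉ P := fun hh => lt_irrefl _ (hP q hh).2
  have hP' : ∀ r ∈ P, r.Prime := fun r hr => (hP r hr).1
  have : NeZero q := ⟨hq.ne_zero⟩
  have : Fact q.Prime := ⟨hq⟩
  have : NeZero (QQ P) := ⟨QQ_ne hP'⟩
  rw [tot_insert hq hP' hqP]
  have hq2 : (2 : ℝ) ≤ q := by exact_mod_cast hq.two_le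
  have hpos : 0 ≤ κ * (1 - 1 / q) * ((q - 1) * (QQ P).totient) := by
    have : (1 : ℝ) / q ≤ 1 := by rw [div_le_one (by linarith)]; linarith
    refine mul_nonneg (mul_nonneg hκ (by linarith)) (mul_nonneg (by linarith) (by positivity))
  by_cases hF : ∃ u0 : (ZMod (QQ (insert q P)))ˣ, DD l (insert q P) (iv u0) = t
  swap
  · have : num l (insert q P) (QQ (insert q P)) (fun d => d = t) = 0 := by
      unfold num
      rw [Finset.card_eq_zero, Finset.filter_eq_empty_iff]
      intro u _ hu
      exact hF ⟨u, hu⟩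
    rw [this]; simpa using hpos
  obtain ⟨u0, hu0⟩ := hF
  set x := XX l q (iv u0) with hx
  set A : Finset (ZMod q)ˣ := Finset.univ.filter (fun a => XX l q (iv a) = x) with hAdef
  have hl0 : ((l : ℤ) : ZMod q) ≠ 0 := by
    rw [Ne, ZMod.intCast_zmod_eq_zero_iff_dvd]
    intro hh
    exact hql (dvd_mul_of_dvd_right (by exact_mod_cast hh) _)
  have hAcard : A.card + 1 ≤ q - 1 := by
    have hex : ∃ a : (ZMod q)ˣ, XX l q (iv a) ≠ x := by
      have h2l : ¬ (q : ℤ) ∣ (l : ℤ) + l := by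
        intro hh
        exact hql (by have : (q : ℤ) ∣ ((2 * l : ℕ) : ℤ) := by
                        convert hh using 1; push_cast; ring
                      exact_mod_cast this)
      have e1 : XX l q (iv (Units.mk0 _ hl0)) = -1 := by
        rw [XX_congr (n := (l : ℤ)) (by rw [iv_cast]; rfl)]
        unfold XX
        rw [if_neg h2l]; simp
      have e2 : XX l q (iv (-Units.mk0 _ hl0)) = 1 := by
        rw [XX_congr (n := -(l : ℤ)) (by rw [iv_cast]; push_cast; rfl)]
        unfold XX
        rw [if_neg (show ¬ (q : ℤ) ∣ -(l : ℤ) - l by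
          rw [← dvd_neg, show -(-(l : ℤ) - l) = (l : ℤ) + l by ring]; exact h2l)]; simp
      by_cases hx1 : x = -1
      · exact ⟨_, by rw [e2, hx1]; norm_num⟩
      · exact ⟨_, by rw [e1]; exact fun hh => hx1 hh.symm⟩
    obtain ⟨a, ha⟩ := hex
    have h1 : A ⊂ Finset.univ := by
      rw [Finset.ssubset_univ_iff]
      intro hh
      have := Finset.mem_univ a
      rw [← hh, hAdef, Finset.mem_filter] at this
      exact ha this.2
    have h2 := Finset.card_lt_card h1
    rw [Finset.card_univ, ZMod.card_units_eq_totient, Nat.totient_prime hq] at h2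
    omega
  have hA' : (A.card : ℝ) ≤ q - 2 := by
    have : A.card + 2 ≤ q := by have := hq.two_le; omega
    have : ((A.card + 2 : ℕ) : ℝ) ≤ q := by exact_mod_cast this
    push_cast at this; linarith
  have hn := num_insert (l := l) hq hP' hqP (fun d => d = t) A ?_ (κ * (QQ P).totient) ?_
  · refine hn.trans ?_
    have hk : 0 ≤ κ * (QQ P).totient := by positivity
    calc (A.card : ℝ) * (κ * (QQ P).totient) ≤ ((1 - 1 / q) * (q - 1)) * (κ * (QQ P).totient) := by
          refine mul_le_mul_of_nonneg_right (hA'.trans ?_) hk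
          have : (1 : ℝ) / q * q = 1 := by field_simp
          have h3 : (0 : ℝ) ≤ 1 / q := by positivity
          nlinarith
      _ = _ := by ring
  · intro u hu a ha
    rw [hAdef, Finset.mem_filter]
    refine ⟨Finset.mem_univ _, ?_⟩
    rw [XX_congr (n := iv u) (by rw [iv_cast, ha])]
    exact indep2 l q hq P hP _ _ (by rw [hu0]; exact hu)
  · intro y
    have := h (QQ P) rfl (t - y * wt q)
    refine le_trans (le_of_eq ?_) this
    congr 2
    funext d
    simp only [eq_iff_iff]
    constructor <;> intro hh <;> linarith

lemma Bd_step {l q : ℕ} {P : Finset ℕ} (hq : q.Prime) 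
    (hP : ∀ r ∈ P, r.Prime) (hqP : q ∉ P) {ε κ : ℝ} (h : Bd l P ε κ) :
    Bd l (insert q P) ε κ := by
  classical
  intro Q _ hQ t
  subst hQ
  have : NeZero q := ⟨hq.ne_zero⟩
  have : NeZero (QQ P) := ⟨QQ_ne hP⟩
  rw [tot_insert hq hP hqP]
  have hn := num_insert (l := l) hq hP hqP (fun d => |d - t| ≤ ε) Finset.univ (fun _ _ _ _ => Finset.mem_univ _) (κ * (QQ P).totient) ?_
  · refine hn.trans (le_of_eq ?_)
    rw [Finset.card_univ, ZMod.card_units_eq_totient, Nat.totient_prime hq, Nat.cast_sub hq.one_le]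
    push_cast; ring
  · intro y
    have := h (QQ P) rfl (t - y * wt q)
    refine le_trans (le_of_eq ?_) this
    congr 2
    funext d
    congr 2; ring

lemma PM_to_Bd {l : ℕ} {P : Finset ℕ} (hP : ∀ r ∈ P, r.Prime) {κ : ℝ} (hκ : 0 ≤ κ) (h : PM l P κ) :
    ∃ ε > 0, Bd l P ε κ := by
  classical
  have : NeZero (QQ P) := ⟨QQ_ne hP⟩
  set V : Finset ℝ := Finset.univ.image (fun u : (ZMod (QQ P))ˣ => DD l P (iv u)) with hV
  have hsep : ∃ ε > 0, ∀ a ∈ V, ∀ b ∈ V, |a - b| ≤ 2 * ε → a = b := by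
    set W : Finset ℝ := (V ×ˢ V).image (fun z => |z.1 - z.2|) |>.filter (fun z => 0 < z) with hW
    have hWe : ∃ ε > 0, ∀ z ∈ W, 2 * ε < z := by
      rcases W.eq_empty_or_nonempty with h0 | h0
      · exact ⟨1, one_pos, by simp [h0]⟩
      · have hm := W.min'_mem h0
        have hm0 : 0 < W.min' h0 := (Finset.mem_filter.1 hm).2
        refine ⟨W.min' h0 / 4, by linarith, fun z hz => ?_⟩
        have := W.min'_le z hz
        linarith
    obtain ⟨ε, hε, hh⟩ := hWe
    refine ⟨ε, hε, fun a ha b hb hab => ?_⟩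
    by_contra hne
    have : |a - b| ∈ W := by
      rw [hW, Finset.mem_filter, Finset.mem_image]
      exact ⟨⟨(a, b), Finset.mk_mem_product ha hb, rfl⟩, abs_pos.2 (sub_ne_zero.2 hne)⟩
    have := hh _ this
    linarith
  obtain ⟨ε, hε, hs⟩ := hsep
  refine ⟨ε, hε, ?_⟩
  intro Q _ hQ t
  subst hQ
  by_cases hF : ∃ u0 : (ZMod (QQ P))ˣ, |DD l P (iv u0) - t| ≤ ε
  swap
  · have : num l P (QQ P) (fun d => |d - t| ≤ ε) = 0 := by
      unfold num
      rw [Finset.card_eq_zero, Finset.filter_eq_empty_iff]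
      intro u _ hu
      exact hF ⟨u, hu⟩
    rw [this]; simp; positivity
  obtain ⟨u0, hu0⟩ := hF
  refine le_trans ?_ (h (QQ P) rfl (DD l P (iv u0)))
  norm_cast
  unfold num
  refine Finset.card_le_card fun u hu => ?_
  simp only [Finset.mem_filter, Finset.mem_univ, true_and] at hu ⊢
  refine hs _ (Finset.mem_image_of_mem _ (Finset.mem_univ _)) _ (Finset.mem_image_of_mem _ (Finset.mem_univ _)) ?_
  rw [abs_le] at *
  constructor <;> linarith [hu.1, hu.2, hu0.1, hu0.2]

end PhiDiff

end

section
namespace PhiDiff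

def PP (l y : ℕ) : Finset ℕ := (Nat.primesLE y).filter (fun q => ¬ q ∣ 2 * l)

lemma mem_PP {l y q : ℕ} : q ∈ PP l y ↔ q ≤ y ∧ q.Prime ∧ ¬ q ∣ 2 * l := by
  unfold PP; rw [Finset.mem_filter, Nat.mem_primesLE, and_assoc]

lemma PP_prime {l y : ℕ} : ∀ r ∈ PP l y, r.Prime := fun _ hr => (mem_PP.1 hr).2.1

lemma PP_succ (l y : ℕ) : PP l (y + 1) = PP l y ∨
    ((y + 1).Prime ∧ ¬ (y + 1) ∣ 2 * l ∧ PP l (y + 1) = insert (y + 1) (PP l y)) := by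
  by_cases h : (y + 1).Prime ∧ ¬ (y + 1) ∣ 2 * l
  · refine Or.inr ⟨h.1, h.2, ?_⟩
    ext q
    rw [Finset.mem_insert, mem_PP, mem_PP]
    constructor
    · rintro ⟨h1, h2⟩
      rcases Nat.lt_or_ge y q with h3 | h3
      · left; omega
      · right; exact ⟨h3, h2⟩
    · rintro (rfl | h1)
      · exact ⟨le_rfl, h⟩
      · exact ⟨by omega, h1.2⟩
  · left
    ext q
    rw [mem_PP, mem_PP]
    constructor
    · rintro ⟨h1, h2⟩
      rcases Nat.lt_or_ge y q with h3 | h3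
      · have : q = y + 1 := by omega
        subst this
        exact absurd h2 h
      · exact ⟨h3, h2⟩
    · rintro h1
      exact ⟨by omega, h1.2⟩

noncomputable def kap (l z : ℕ) : ℝ := ∏ q ∈ PP l z, (1 - 1 / (q : ℝ))

lemma kap_nonneg (l z : ℕ) : 0 ≤ kap l z := by
  refine Finset.prod_nonneg fun q hq => ?_
  have h2 : (2 : ℝ) ≤ q := by exact_mod_cast (PP_prime q hq).two_le
  have : (1 : ℝ) / q ≤ 1 := by rw [div_le_one (by linarith)]; linarith
  linarith

lemma PM_PP (l z : ℕ) : PM l (PP l z) (kap l z) := by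
  induction z with
  | zero =>
    intro Q _ hQ t
    have : PP l 0 = ∅ := by
      ext q; rw [mem_PP]; simp
      intro h; subst h; intro h2; exact absurd h2 (by norm_num)
    unfold kap
    rw [this]
    simp only [Finset.prod_empty, one_mul]
    norm_cast
    unfold num
    rw [← ZMod.card_units_eq_totient]
    exact Finset.card_le_univ _
  | succ y ih =>
    rcases PP_succ l y with h | ⟨h1, h2, h3⟩
    · unfold kap at *
      rw [h]; exact ih
    · have hy : y + 1 ∉ PP l y := by rw [mem_PP]; omega
      have e : kap l (y + 1) = kap l y * (1 - 1 / ((y + 1 : ℕ) : ℝ)) := by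
        unfold kap
        rw [h3, Finset.prod_insert hy, mul_comm]
      rw [e, h3]
      refine PM_step h1 h2 (fun r hr => ⟨PP_prime r hr, ?_⟩) (kap_nonneg _ _) ih
      have := (mem_PP.1 hr).1
      omega

lemma Bd_mono {l z y : ℕ} (hzy : z ≤ y) {ε κ : ℝ} (h : Bd l (PP l z) ε κ) : Bd l (PP l y) ε κ := by
  induction y, hzy using Nat.le_induction with
  | base => exact h
  | succ y _ ih =>
    rcases PP_succ l y with h | ⟨h1, h2, h3⟩
    · rw [h]; exact ih
    · rw [h3]
      exact Bd_step h1 PP_prime (by rw [mem_PP]; omega) ih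

lemma kap_tendsto (l : ℕ) (hl : 0 < l) : Tendsto (kap l) atTop (𝓝 0) := by
  classical
  set f : ℕ → ℝ := fun q => if q.Prime ∧ ¬ q ∣ 2 * l then 1 / (q : ℝ) else 0 with hf
  have hf0 : ∀ q, 0 ≤ f q := by intro q; simp only [hf]; split_ifs <;> positivity
  have hns : ¬ Summable f := by
    intro hs
    apply not_summable_one_div_on_primes
    refine (summable_congr_cofinite ?_).1 hs
    rw [Filter.EventuallyEq, Filter.eventually_cofinite]
    refine (Set.finite_Iic (2 * l)).subset ?_
    intro q hq
    by_contra hlt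
    apply hq
    have : ¬ q ∣ 2 * l := fun hd => hlt (Nat.le_of_dvd (by omega) hd)
    simp only [hf, this, not_false_iff, and_true, Set.indicator]
    rfl
  rw [not_summable_iff_tendsto_nat_atTop_of_nonneg hf0] at hns
  have h1 : Tendsto (fun z : ℕ => Real.exp (-∑ i ∈ Finset.range (z + 1), f i)) atTop (𝓝 0) :=
    Real.tendsto_exp_neg_atTop_nhds_zero.comp (hns.comp (tendsto_add_atTop_nat 1))
  refine squeeze_zero (kap_nonneg l) (fun z => ?_) h1
  have e : ∑ i ∈ Finset.range (z + 1), f i = ∑ q ∈ PP l z, 1 / (q : ℝ) := by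
    simp only [hf]
    rw [← Finset.sum_filter]
    refine Finset.sum_congr ?_ fun _ _ => rfl
    ext q
    rw [mem_PP, Finset.mem_filter, Finset.mem_range, Nat.lt_succ_iff]
  rw [e, ← Finset.sum_neg_distrib, Real.exp_sum]
  unfold kap
  refine Finset.prod_le_prod (fun q hq => ?_) fun q _ => ?_
  · have h2 : (2 : ℝ) ≤ q := by exact_mod_cast (PP_prime q hq).two_le
    have : (1 : ℝ) / q ≤ 1 := by rw [div_le_one (by linarith)]; linarith
    linarith
  · have := Real.add_one_le_exp (-(1 / (q : ℝ)))
    linarith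

lemma num_symm (l : ℕ) (P : Finset ℕ) (Q : ℕ) [NeZero Q] (hP : ∀ q ∈ P, q ∣ Q) :
    num l P Q (fun d => 0 < d) = num l P Q (fun d => d < 0) := by
  classical
  have key : ∀ u : (ZMod Q)ˣ, DD l P (iv (-u)) = - DD l P (iv u) := by
    intro u
    rw [← DD_neg]
    refine DD_congr fun q hq => cast_of_dvd (hP q hq) ?_
    rw [iv_cast]; push_cast; rw [iv_cast]
  unfold num
  refine Finset.card_nbij' (fun u => -u) (fun u => -u) ?_ ?_ ?_ ?_
  · intro u hu
    simp only [Finset.coe_filter, Finset.mem_univ, true_and, Set.mem_ofPred_eq] at hu ⊢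
    rw [key]; linarith
  · intro u hu
    simp only [Finset.coe_filter, Finset.mem_univ, true_and, Set.mem_ofPred_eq] at hu ⊢
    rw [key]; linarith
  · intro u _; simp
  · intro u _; simp

lemma num_total (l : ℕ) (P : Finset ℕ) (Q : ℕ) [NeZero Q] :
    num l P Q (fun d => 0 < d) + num l P Q (fun d => d < 0) + num l P Q (fun d => d = 0) = Q.totient := by
  classical
  unfold num
  rw [← ZMod.card_units_eq_totient, ← Finset.card_univ, ← Finset.card_union_of_disjoint,
    ← Finset.card_union_of_disjoint]
  · congr 1
    ext u
    simp only [Finset.mem_union, Finset.mem_filter, Finset.mem_univ, true_and, iff_true]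
    rcases lt_trichotomy (DD l P (iv u)) 0 with h | h | h <;> tauto
  · rw [Finset.disjoint_left]
    intro u
    simp only [Finset.mem_union, Finset.mem_filter, Finset.mem_univ, true_and]
    rintro (h | h) <;> linarith
  · rw [Finset.disjoint_left]
    intro u
    simp only [Finset.mem_filter, Finset.mem_univ, true_and]
    intro h; linarith

lemma residue (l : ℕ) (hl : 0 < l) (δ : ℝ) (hδ : 0 < δ) : ∃ z : ℕ, ∃ ε > 0, ∀ y ≥ z,
    ∀ (Q : ℕ) [NeZero Q], Q = QQ (PP l y) →
      (num l (PP l y) Q (fun d => |d| ≤ ε) : ℝ) / Q.totient ≤ δ ∧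
      |(num l (PP l y) Q (fun d => 0 < d) : ℝ) / Q.totient - 1 / 2| ≤ δ := by
  classical
  obtain ⟨z, hz⟩ := ((kap_tendsto l hl).eventually (gt_mem_nhds hδ)).exists
  obtain ⟨ε, hε, hB⟩ := PM_to_Bd PP_prime (kap_nonneg l z) (PM_PP l z)
  refine ⟨z, ε, hε, fun y hy Q _ hQ => ?_⟩
  have h1 := Bd_mono hy hB Q hQ 0
  simp only [sub_zero] at h1
  have hφ : (0 : ℝ) < Q.totient := by exact_mod_cast Nat.totient_pos.2 (NeZero.pos Q)
  have h2 : (num l (PP l y) Q (fun d => |d| ≤ ε) : ℝ) ≤ δ * Q.totient :=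
    h1.trans (mul_le_mul_of_nonneg_right hz.le hφ.le)
  refine ⟨(div_le_iff₀ hφ).2 h2, ?_⟩
  have h3 : (num l (PP l y) Q (fun d => d = 0) : ℝ) ≤ num l (PP l y) Q (fun d => |d| ≤ ε) := by
    norm_cast
    unfold num
    refine Finset.card_le_card fun u hu => ?_
    simp only [Finset.mem_filter, Finset.mem_univ, true_and] at hu ⊢
    rw [hu, abs_zero]; exact hε.le
  have h4 := num_symm l (PP l y) Q (by subst hQ; exact dvd_QQ)
  have h5 := num_total l (PP l y) Q
  rw [← h4] at h5
  have h6 : (num l (PP l y) Q (fun d => 0 < d) : ℝ) + num l (PP l y) Q (fun d => 0 < d) +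
      num l (PP l y) Q (fun d => d = 0) = Q.totient := by exact_mod_cast h5
  have h7 : (0 : ℝ) ≤ num l (PP l y) Q (fun d => d = 0) := by positivity
  have e : (num l (PP l y) Q (fun d => 0 < d) : ℝ) / Q.totient - 1 / 2
      = - ((num l (PP l y) Q (fun d => d = 0) : ℝ) / 2 / Q.totient) := by
    field_simp; linarith
  rw [e, abs_neg, abs_of_nonneg (by positivity), div_le_iff₀ hφ]
  linarith

lemma dens_D (l : ℕ) (P : Finset ℕ) (Q : ℕ) [NeZero Q] (hP : ∀ q ∈ P, q ∣ Q) (T : ℝ → Prop) :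
    Tendsto (fun x : ℕ => (cnt (fun p : ℕ => T (DD l P (p : ℤ))) x : ℝ) / Nat.primeCounting x) atTop
      (𝓝 ((num l P Q T : ℝ) / Q.totient)) := by
  classical
  have h := dens_set (Q := Q) (fun a => T (DD l P (a.cast : ℤ)))
  have e : (fun p : ℕ => T (DD l P (((p : ℕ) : ZMod Q).cast : ℤ))) = fun p : ℕ => T (DD l P (p : ℤ)) := by
    funext p
    congr 1
    refine DD_congr fun q hq => cast_of_dvd (hP q hq) ?_
    simp
  rw [e] at h
  exact h

lemma dens_main (l : ℕ) (hl : 0 < l) (δ : ℝ) (hδ : 0 < δ) : ∃ z : ℕ, ∃ ε > 0, ∀ y ≥ z,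
    ∀ᶠ x : ℕ in atTop, (cnt (fun p : ℕ => |DD l (PP l y) (p : ℤ)| ≤ ε) x : ℝ) ≤ δ * Nat.primeCounting x ∧
      |(cnt (fun p : ℕ => 0 < DD l (PP l y) (p : ℤ)) x : ℝ) / Nat.primeCounting x - 1 / 2| ≤ δ := by
  obtain ⟨z, ε, hε, h⟩ := residue l hl (δ / 2) (by positivity)
  refine ⟨z, ε, hε, fun y hy => ?_⟩
  have : NeZero (QQ (PP l y)) := ⟨QQ_ne PP_prime⟩
  obtain ⟨h1, h2⟩ := h y hy _ rfl
  have t1 := dens_D l (PP l y) _ dvd_QQ (fun d => |d| ≤ ε)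
  have t2 := dens_D l (PP l y) _ dvd_QQ (fun d => 0 < d)
  have e1 := t1.eventually (gt_mem_nhds (lt_of_le_of_lt h1 (half_lt_self hδ)))
  have e2 := ((t2.sub_const (1 / 2)).abs).eventually (gt_mem_nhds (lt_of_le_of_lt h2 (half_lt_self hδ)))
  filter_upwards [e1, e2, eventually_ge_atTop 2] with x h3 h4 hx
  have hpi : (0 : ℝ) < Nat.primeCounting x := by
    have : 0 < Nat.primeCounting x := by
      rw [← card_primesLE, Finset.card_pos]
      exact ⟨2, Nat.mem_primesLE.2 ⟨hx, Nat.prime_two⟩⟩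
    exact_mod_cast this
  exact ⟨((div_lt_iff₀ hpi).1 h3).le, h4.le⟩

end PhiDiff

end

section
namespace PhiDiff

lemma prod_AP_bound {q a K : ℕ} (hq : q.Prime) (ha : 0 < a) (haq : a < q) (s : Finset ℕ)
    (hs : ∀ p ∈ s, p.Prime ∧ K < p ∧ p % q = a ∧ p / q < K) :
    ∏ p ∈ s, p ≤ q ^ (2 * K) := by
  have : Fact q.Prime := ⟨hq⟩
  obtain ⟨v, M, hqM, hM⟩ := Nat.exists_eq_pow_mul_and_not_dvd (Nat.factorial_ne_zero K) q hq.ne_one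
  have hM0 : M ≠ 0 := by rintro rfl; exact hqM (dvd_zero _)
  have hcop : q.Coprime M := (Nat.Prime.coprime_iff_not_dvd hq).2 hqM
  set R := ∏ n ∈ Finset.range K, (q * n + a) with hR
  have hv : v ≤ K := by
    have h1 : v ≤ padicValNat q K.factorial :=
      (padicValNat_dvd_iff_le (Nat.factorial_ne_zero K)).1 (by rw [hM]; exact dvd_mul_right _ _)
    have h2 := sub_one_mul_padicValNat_factorial (p := q) K
    have h3 : 1 * padicValNat q K.factorial ≤ (q - 1) * padicValNat q K.factorial :=
      Nat.mul_le_mul_right _ (by have := hq.two_le; omega)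
    omega
  have hMR : M ∣ R := by
    obtain ⟨m, _, hm⟩ := Nat.exists_mul_mod_eq_of_coprime a hcop hM0
    have h1 : R ≡ ∏ n ∈ Finset.range K, (q * (m + n)) [MOD M] := by
      rw [← ZMod.natCast_eq_natCast_iff]
      rw [hR]
      push_cast
      refine Finset.prod_congr rfl fun n _ => ?_
      have h2 : ((q * m : ℕ) : ZMod M) = (a : ℕ) := (ZMod.natCast_eq_natCast_iff _ _ _).2 hm
      push_cast at h2
      rw [← h2]; ring
    rw [Nat.ModEq.dvd_iff h1 dvd_rfl, Finset.prod_mul_distrib, ← Nat.ascFactorial_eq_prod_range]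
    refine dvd_mul_of_dvd_right (dvd_trans ?_ (Nat.factorial_dvd_ascFactorial _ _)) _
    rw [hM]; exact dvd_mul_left _ _
  have hRle : R ≤ q ^ K * K.factorial := by
    rw [hR]
    have : q ^ K * K.factorial = ∏ n ∈ Finset.range K, (q * (n + 1)) := by
      rw [Finset.prod_mul_distrib, Finset.prod_const, Finset.card_range, Finset.prod_range_add_one_eq_factorial]
    rw [this]
    refine Finset.prod_le_prod' fun n _ => ?_
    rw [mul_add, mul_one]; omega
  have ha0 : 0 < R := by
    refine Nat.pos_of_ne_zero (Finset.prod_ne_zero_iff.2 fun n hn h0 => ?_)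
    omega
  have hPR : (∏ p ∈ s, p) ∣ R := by
    refine Finset.prod_primes_dvd _ (fun p hp => (hs p hp).1.prime) fun p hp => ?_
    obtain ⟨h1, h2, h3, h4⟩ := hs p hp
    have : p = q * (p / q) + a := by rw [← h3]; exact (Nat.div_add_mod p q).symm
    rw [hR]
    have h5 := Finset.dvd_prod_of_mem (fun n => q * n + a) (Finset.mem_range.2 h4)
    simp only [← this] at h5
    exact h5
  have hcop2 : (∏ p ∈ s, p).Coprime M := by
    refine Nat.Coprime.prod_left fun p hp => ?_
    obtain ⟨h1, h2, h3, h4⟩ := hs p hp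
    rw [Nat.Prime.coprime_iff_not_dvd h1]
    intro h5
    have h6 : p ∣ K.factorial := by rw [hM]; exact dvd_mul_of_dvd_right h5 _
    exact absurd ((Nat.Prime.dvd_factorial h1).1 h6) (by omega)
  have h1 : (∏ p ∈ s, p) * M ≤ R := Nat.le_of_dvd ha0 (Nat.Coprime.mul_dvd_of_dvd_of_dvd hcop2 hPR hMR)
  have h2 : (∏ p ∈ s, p) * M ≤ q ^ K * q ^ v * M := by
    calc _ ≤ R := h1
      _ ≤ _ := hRle
      _ = _ := by rw [hM]; ring
  have h3 := Nat.le_of_mul_le_mul_right h2 (Nat.pos_of_ne_zero hM0)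
  refine h3.trans ?_
  rw [← pow_add]
  exact Nat.pow_le_pow_right hq.pos (by omega)

end PhiDiff

end

section
namespace PhiDiff

def cAP (q a x : ℕ) : ℕ := ((Nat.primesLE x).filter (fun p => p % q = a)).card

lemma cAP_triv (q a x : ℕ) : cAP q a x ≤ x / q + 1 := by
  unfold cAP
  rw [← Finset.card_range (x / q + 1)]
  refine Finset.card_le_card_of_injOn (fun p => p / q) ?_ ?_
  · intro p hp
    simp only [Finset.coe_filter, Set.mem_ofPred_eq, Nat.mem_primesLE] at hp
    simp only [Finset.coe_range, Set.mem_Iio]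
    exact Nat.lt_succ_of_le (Nat.div_le_div_right hp.1.1)
  · intro p hp p' hp' h
    simp only [Finset.coe_filter, Set.mem_ofPred_eq, Nat.mem_primesLE] at hp hp'
    simp only at h
    rw [← Nat.div_add_mod p q, ← Nat.div_add_mod p' q, h, hp.2, hp'.2]

lemma cAP_le {q a x : ℕ} (hq : q.Prime) (ha : 0 < a) (haq : a < q) :
    (cAP q a x : ℝ) * Real.log ((x / q + 1 : ℕ) : ℝ) ≤
      (Nat.primeCounting (x / q + 1) : ℝ) * Real.log ((x / q + 1 : ℕ) : ℝ) + 2 * ((x / q + 1 : ℕ) : ℝ) * Real.log q := by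
  set K := x / q + 1 with hK
  set s := (Nat.primesLE x).filter (fun p => p % q = a ∧ K < p) with hs
  have hK1 : (1 : ℝ) ≤ K := by exact_mod_cast (Nat.succ_pos _ : 0 < K)
  have hlK : 0 ≤ Real.log (K : ℝ) := Real.log_nonneg hK1
  have h1 : cAP q a x ≤ Nat.primeCounting K + s.card := by
    unfold cAP
    rw [← card_primesLE]
    refine le_trans (Finset.card_le_card (t := Nat.primesLE K ∪ s) ?_) (Finset.card_union_le _ _)
    intro p hp
    rw [Finset.mem_filter] at hp
    rw [Finset.mem_union, hs, Finset.mem_filter]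
    rcases Nat.lt_or_ge K p with h | h
    · exact Or.inr ⟨hp.1, hp.2, h⟩
    · exact Or.inl (Nat.mem_primesLE.2 ⟨h, (Nat.mem_primesLE.1 hp.1).2⟩)
  have hs' : ∀ p ∈ s, p.Prime ∧ K < p ∧ p % q = a ∧ p / q < K := by
    intro p hp
    rw [hs, Finset.mem_filter, Nat.mem_primesLE] at hp
    exact ⟨hp.1.2, hp.2.2, hp.2.1, Nat.lt_succ_of_le (Nat.div_le_div_right hp.1.1)⟩
  have h2 := prod_AP_bound hq ha haq s hs'
  have h3 : K ^ s.card ≤ q ^ (2 * K) :=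
    le_trans (Finset.pow_card_le_prod s (fun p => p) K fun p hp => (hs' p hp).2.1.le) h2
  have h4 : (s.card : ℝ) * Real.log K ≤ 2 * K * Real.log q := by
    have h5 : ((K : ℝ)) ^ s.card ≤ (q : ℝ) ^ (2 * K) := by exact_mod_cast h3
    have h6 := Real.log_le_log (by positivity) h5
    rw [Real.log_pow, Real.log_pow] at h6
    push_cast at h6
    exact h6
  have h5 : (cAP q a x : ℝ) ≤ Nat.primeCounting K + s.card := by exact_mod_cast h1
  nlinarith

lemma AP_bound : ∀ᶠ x : ℕ in atTop, ∀ q a : ℕ, q.Prime → 0 < a → a < q → 3 ≤ q → q ≤ 2 * x →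
    (cAP q a x : ℝ) ≤ 16 * (x / Real.log x) * (Real.log q / q) := by
  have h0 := pnt.eventually (gt_mem_nhds (by norm_num : (1 : ℝ) < 2))
  obtain ⟨K0, hK0⟩ := eventually_atTop.1 h0
  filter_upwards [eventually_ge_atTop (K0 ^ 2), eventually_ge_atTop 3] with x hx hx3 q a hq ha haq hq3 hq2x
  have hlq : 1 ≤ Real.log q := by
    rw [Real.le_log_iff_exp_le (by exact_mod_cast hq.pos)]
    have : (3 : ℝ) ≤ q := by exact_mod_cast hq3
    linarith [Real.exp_one_lt_d9]
  have hxR : (3 : ℝ) ≤ x := by exact_mod_cast hx3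
  have hlx : 0 < Real.log x := Real.log_pos (by linarith)
  have hqR : (0 : ℝ) < q := by exact_mod_cast hq.pos
  suffices h : (cAP q a x : ℝ) * Real.log x ≤ 16 * (x / q) * Real.log q by
    rw [← div_le_div_iff_of_pos_right hlx] at h
    rw [mul_div_assoc, div_self hlx.ne', mul_one] at h
    refine h.trans (le_of_eq ?_)
    field_simp
  have hKup : ((x / q + 1 : ℕ) : ℝ) ≤ x / q + 1 := by
    push_cast
    have : ((x / q : ℕ) : ℝ) ≤ (x : ℝ) / q := Nat.cast_div_le
    linarith
  rcases Nat.lt_or_ge x (q ^ 2) with h | h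
  · have h1 : Real.log x ≤ 2 * Real.log q := by
      have : (x : ℝ) ≤ (q : ℝ) ^ 2 := by exact_mod_cast h.le
      have := Real.log_le_log (by linarith) this
      rw [Real.log_pow] at this
      exact_mod_cast this
    have h2 : (cAP q a x : ℝ) ≤ 3 * (x / q) := by
      have h3 : (cAP q a x : ℝ) ≤ ((x / q + 1 : ℕ) : ℝ) := by exact_mod_cast cAP_triv q a x
      have h4 : (1 : ℝ) ≤ 2 * (x / q) := by
        rw [← mul_div_assoc, le_div_iff₀ hqR]
        exact_mod_cast (by omega : 1 * q ≤ 2 * x)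
      linarith
    calc (cAP q a x : ℝ) * Real.log x ≤ (3 * (x / q)) * (2 * Real.log q) := by
          refine mul_le_mul h2 h1 hlx.le (by positivity)
      _ ≤ _ := by
          have : 0 ≤ (x / q : ℝ) * Real.log q := by positivity
          nlinarith
  · have hqx : q ≤ x / q := by
      rw [Nat.le_div_iff_mul_le hq.pos]; nlinarith
    set K := x / q + 1 with hK
    have hKx : x < K * q := by
      have := Nat.div_add_mod x q
      have h2 := Nat.mod_lt x hq.pos
      rw [hK]; nlinarith
    have hK2 : x ≤ K ^ 2 := by nlinarith
    have hKK0 : K0 ≤ K := by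
      by_contra hh
      push Not at hh
      nlinarith
    have hKpos : (0 : ℝ) < K := by exact_mod_cast (by omega : 0 < K)
    have h1 := hK0 K hKK0
    rw [div_lt_iff₀ hKpos] at h1
    have h2 := cAP_le (x := x) hq ha haq
    rw [← hK] at h2
    have h3 : Real.log x ≤ 2 * Real.log K := by
      have : (x : ℝ) ≤ (K : ℝ) ^ 2 := by exact_mod_cast hK2
      have := Real.log_le_log (by linarith) this
      rw [Real.log_pow] at this
      exact_mod_cast this
    have h4 : (K : ℝ) ≤ 2 * (x / q) := by
      have : (1 : ℝ) ≤ x / q := by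
        rw [le_div_iff₀ hqR, one_mul]
        exact_mod_cast (by nlinarith [hq.two_le] : q ≤ x)
      linarith
    have h5 : (cAP q a x : ℝ) * Real.log K ≤ 4 * K * Real.log q := by nlinarith
    have h6 : (cAP q a x : ℝ) * Real.log x ≤ (cAP q a x : ℝ) * (2 * Real.log K) :=
      mul_le_mul_of_nonneg_left h3 (by positivity)
    nlinarith

lemma log_sum (δ : ℝ) (hδ : 0 < δ) : ∃ y0 : ℕ, ∀ t : Finset ℕ, (∀ q ∈ t, y0 < q) →
    ∑ q ∈ t, Real.log q / (q : ℝ) ^ 2 ≤ δ := by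
  have hs : Summable (fun n : ℕ => Real.log n / (n : ℝ) ^ 2) := by
    have h1 : Summable (fun n : ℕ => 2 * (n : ℝ) ^ (-(3 / 2) : ℝ)) :=
      (Real.summable_nat_rpow.2 (by norm_num)).mul_left 2
    refine h1.of_nonneg_of_le (fun n => div_nonneg (Real.log_natCast_nonneg n) (by positivity)) fun n => ?_
    rcases Nat.eq_zero_or_pos n with rfl | hn
    · simp
    have hn' : (0 : ℝ) < n := by exact_mod_cast hn
    have h2 := Real.log_le_rpow_div hn'.le (by norm_num : (0 : ℝ) < 1 / 2)
    rw [div_le_iff₀ (by positivity)]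
    refine h2.trans (le_of_eq ?_)
    rw [mul_assoc, ← Real.rpow_natCast, ← Real.rpow_add hn']
    norm_num
    ring
  obtain ⟨s, hs'⟩ := summable_iff_vanishing_norm.1 hs δ hδ
  refine ⟨s.sup id, fun t ht => ?_⟩
  have := hs' t (by
    rw [Finset.disjoint_left]
    intro q hq hqs
    have h1 : q ≤ s.sup id := Finset.le_sup (f := id) hqs
    exact absurd (ht q hq) (by omega))
  exact (le_abs_self _).trans (by rw [← Real.norm_eq_abs]; exact this.le)

end PhiDiff

end

namespace PhiDiff

def PT (y x : ℕ) : Finset ℕ := (Nat.primesLE (2 * x)).filter (fun q => y < q)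

noncomputable def tl (l y x p : ℕ) : ℝ := ∑ q ∈ PT y x, (1 / (q : ℝ)) *
  ((if q ∣ p + l then 1 else 0) + (if q ∣ p - l then 1 else 0))

lemma tail_sum (l : ℕ) (hl : 0 < l) (δ : ℝ) (hδ : 0 < δ) : ∃ y0 : ℕ, ∀ y ≥ y0, ∀ᶠ x : ℕ in atTop,
    ∑ p ∈ (Nat.primesLE x).filter (fun p => l < p), tl l y x p ≤ δ * Nat.primeCounting x := by
  obtain ⟨y0, hy0⟩ := log_sum (δ / 64) (by positivity)
  refine ⟨max y0 (2 * l + 2), fun y hy => ?_⟩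
  have hy1 : y0 ≤ y := (le_max_left _ _).trans hy
  have hy2 : 2 * l + 2 ≤ y := (le_max_right _ _).trans hy
  filter_upwards [AP_bound, pnt.eventually (lt_mem_nhds (by norm_num : (1 / 2 : ℝ) < 1)),
    eventually_ge_atTop 3] with x hA hpnt hx3
  have hxR : (3 : ℝ) ≤ x := by exact_mod_cast hx3
  have hlx : 0 < Real.log x := Real.log_pos (by linarith)
  have hpi : x / Real.log x ≤ 2 * Nat.primeCounting x := by
    rw [lt_div_iff₀ (by linarith)] at hpnt
    rw [div_le_iff₀ hlx]; linarith
  unfold tl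
  rw [Finset.sum_comm]
  have step : ∀ q ∈ PT y x, ∑ p ∈ (Nat.primesLE x).filter (fun p => l < p), (1 / (q : ℝ)) *
      ((if q ∣ p + l then 1 else 0) + (if q ∣ p - l then 1 else 0)) ≤
      64 * Nat.primeCounting x * (Real.log q / (q : ℝ) ^ 2) := by
    intro q hq
    unfold PT at hq
    rw [Finset.mem_filter, Nat.mem_primesLE] at hq
    obtain ⟨⟨hq2x, hqp⟩, hyq⟩ := hq
    have hqR : (0 : ℝ) < q := by exact_mod_cast hqp.pos
    rw [← Finset.mul_sum, Finset.sum_add_distrib, Finset.sum_boole, Finset.sum_boole]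
    have e1 : (((Nat.primesLE x).filter (fun p => l < p)).filter (fun p => q ∣ p + l)).card ≤ cAP q (q - l) x := by
      unfold cAP
      refine Finset.card_le_card fun p hp => ?_
      rw [Finset.mem_filter, Finset.mem_filter] at hp
      rw [Finset.mem_filter]
      refine ⟨hp.1.1, ?_⟩
      obtain ⟨k, hk⟩ := hp.2
      have hk0 : k ≠ 0 := by rintro rfl; omega
      obtain ⟨j, rfl⟩ := Nat.exists_eq_succ_of_ne_zero hk0
      have : p = (q - l) + q * j := by
        rw [Nat.mul_succ] at hk; omega
      rw [this, Nat.add_mul_mod_self_left]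
      exact Nat.mod_eq_of_lt (by omega)
    have e2 : (((Nat.primesLE x).filter (fun p => l < p)).filter (fun p => q ∣ p - l)).card ≤ cAP q l x := by
      unfold cAP
      refine Finset.card_le_card fun p hp => ?_
      rw [Finset.mem_filter, Finset.mem_filter] at hp
      rw [Finset.mem_filter]
      refine ⟨hp.1.1, ?_⟩
      obtain ⟨k, hk⟩ := hp.2
      have : p = l + q * k := by omega
      rw [this, Nat.add_mul_mod_self_left]
      exact Nat.mod_eq_of_lt (by omega)
    have b1 := hA q (q - l) hqp (by omega) (by omega) (by omega) hq2x
    have b2 := hA q l hqp hl (by omega) (by omega) hq2x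
    have e1' : ((((Nat.primesLE x).filter (fun p => l < p)).filter (fun p => q ∣ p + l)).card : ℝ) ≤ cAP q (q - l) x := by
      exact_mod_cast e1
    have e2' : ((((Nat.primesLE x).filter (fun p => l < p)).filter (fun p => q ∣ p - l)).card : ℝ) ≤ cAP q l x := by
      exact_mod_cast e2
    have hlq : 0 ≤ Real.log q / q := div_nonneg (Real.log_natCast_nonneg q) hqR.le
    calc _ ≤ (1 / (q : ℝ)) * (32 * (x / Real.log x) * (Real.log q / q)) := by
          refine mul_le_mul_of_nonneg_left ?_ (by positivity)
          linarith
      _ ≤ (1 / (q : ℝ)) * (32 * (2 * Nat.primeCounting x) * (Real.log q / q)) := by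
          gcongr
      _ = _ := by field_simp; ring
  refine (Finset.sum_le_sum step).trans ?_
  rw [← Finset.mul_sum]
  have h := hy0 (PT y x) (by
    intro q hq
    unfold PT at hq
    rw [Finset.mem_filter] at hq
    omega)
  have hp0 : (0 : ℝ) ≤ Nat.primeCounting x := by positivity
  nlinarith

lemma wt_bound {q : ℕ} (hq : q.Prime) : 0 ≤ wt q ∧ wt q ≤ 2 * (1 / q) := by
  have h2 : (2 : ℝ) ≤ q := by exact_mod_cast hq.two_le
  have e : (1 : ℝ) - 1 / q = (q - 1) / q := by field_simp
  have h3 : 0 < ((q : ℝ) - 1) / q := div_pos (by linarith) (by linarith)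
  unfold wt
  rw [e]
  constructor
  · have : Real.log (((q : ℝ) - 1) / q) ≤ 0 := Real.log_nonpos h3.le (by
      rw [div_le_one (by linarith)]; linarith)
    linarith
  · have h4 := Real.one_sub_inv_le_log_of_pos h3
    have h5 : 1 - (((q : ℝ) - 1) / q)⁻¹ = - (1 / (q - 1)) := by
      have : (q : ℝ) - 1 ≠ 0 := by linarith
      field_simp; ring
    have h6 : 1 / ((q : ℝ) - 1) ≤ 2 * (1 / q) := by
      rw [← mul_div_assoc, div_le_div_iff₀ (by linarith) (by linarith)]
      linarith
    linarith

lemma log_totient {n N : ℕ} (hn : 0 < n) (hN : n ≤ N) :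
    Real.log (n.totient : ℝ) = Real.log n - ∑ q ∈ Nat.primesLE N, (if q ∣ n then wt q else 0) := by
  have h1 := Nat.totient_eq_mul_prod_factors n
  have h2 : (n.totient : ℝ) = n * ∏ p ∈ n.primeFactors, (1 - 1 / (p : ℝ)) := by
    have : ((n.totient : ℚ) : ℝ) = ((n * ∏ p ∈ n.primeFactors, (1 - (p : ℚ)⁻¹) : ℚ) : ℝ) := by rw [h1]
    push_cast at this
    simpa using this
  have hpos : ∀ p ∈ n.primeFactors, (1 : ℝ) - 1 / p ≠ 0 := by
    intro p hp
    have h2 : (2 : ℝ) ≤ p := by exact_mod_cast (Nat.prime_of_mem_primeFactors hp).two_le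
    have : (1 : ℝ) / p < 1 := by rw [div_lt_one (by linarith)]; linarith
    linarith
  have e : n.primeFactors = (Nat.primesLE N).filter (fun q => q ∣ n) := by
    ext q
    rw [Nat.mem_primeFactors, Finset.mem_filter, Nat.mem_primesLE]
    constructor
    · rintro ⟨a, b, c⟩; exact ⟨⟨(Nat.le_of_dvd hn b).trans hN, a⟩, b⟩
    · rintro ⟨⟨_, a⟩, b⟩; exact ⟨a, b, hn.ne'⟩
  rw [h2, Real.log_mul (by exact_mod_cast hn.ne') (Finset.prod_ne_zero_iff.2 hpos), Real.log_prod hpos,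
    ← Finset.sum_filter, ← e]
  unfold wt
  rw [Finset.sum_neg_distrib]; ring

lemma main_diff {l y x p : ℕ} (hlp : l < p) (hpx : p ≤ x) (hy : y ≤ 2 * x) :
    |(Real.log ((p - l).totient : ℝ) - Real.log ((p + l).totient : ℝ)) -
      (Real.log ((p - l : ℕ) : ℝ) - Real.log ((p + l : ℕ) : ℝ)) - DD l (PP l y) p| ≤ 2 * tl l y x p := by
  rw [log_totient (n := p - l) (N := 2 * x) (by omega) (by omega),
    log_totient (n := p + l) (N := 2 * x) (by omega) (by omega)]
  have hX : ∀ q : ℕ, (XX l q p : ℝ) * wt q = (if q ∣ p + l then wt q else 0) - (if q ∣ p - l then wt q else 0) := by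
    intro q
    unfold XX
    have a1 : ((q : ℤ) ∣ (p : ℤ) + l) ↔ q ∣ p + l := by exact_mod_cast Iff.rfl
    have a2 : ((q : ℤ) ∣ (p : ℤ) - l) ↔ q ∣ p - l := by
      rw [← Nat.cast_sub hlp.le]; exact Int.natCast_dvd_natCast
    simp only [a1, a2]
    split_ifs <;> simp
  have e1 : ∑ q ∈ Nat.primesLE (2 * x), (XX l q p : ℝ) * wt q =
      ∑ q ∈ PT y x, (XX l q p : ℝ) * wt q + DD l (PP l y) p := by
    rw [← Finset.sum_filter_add_sum_filter_not (Nat.primesLE (2 * x)) (fun q => y < q)]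
    congr 1
    unfold DD
    symm
    refine Finset.sum_subset ?_ ?_
    · intro q hq
      rw [mem_PP] at hq
      rw [Finset.mem_filter, Nat.mem_primesLE]
      exact ⟨⟨by omega, hq.2.1⟩, by omega⟩
    · intro q hq hq'
      rw [Finset.mem_filter, Nat.mem_primesLE] at hq
      rw [mem_PP] at hq'
      have hd : q ∣ 2 * l := by
        by_contra hh
        exact hq' ⟨by omega, hq.1.2, hh⟩
      have : q ∣ p + l ↔ q ∣ p - l := by
        rw [show p + l = (p - l) + 2 * l by omega]
        exact (Nat.dvd_add_iff_left hd).symm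
      rw [hX]
      simp [this]
  have e2 : Real.log ((p - l : ℕ) : ℝ) - ∑ q ∈ Nat.primesLE (2 * x), (if q ∣ p - l then wt q else 0) -
      (Real.log ((p + l : ℕ) : ℝ) - ∑ q ∈ Nat.primesLE (2 * x), (if q ∣ p + l then wt q else 0)) -
      (Real.log ((p - l : ℕ) : ℝ) - Real.log ((p + l : ℕ) : ℝ)) - DD l (PP l y) p =
      ∑ q ∈ PT y x, (XX l q p : ℝ) * wt q := by
    have : ∑ q ∈ Nat.primesLE (2 * x), (XX l q p : ℝ) * wt q =
      ∑ q ∈ Nat.primesLE (2 * x), (if q ∣ p + l then wt q else 0) -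
        ∑ q ∈ Nat.primesLE (2 * x), (if q ∣ p - l then wt q else 0) := by
      rw [← Finset.sum_sub_distrib]
      exact Finset.sum_congr rfl fun q _ => hX q
    linarith
  rw [e2]
  refine (Finset.abs_sum_le_sum_abs _ _).trans ?_
  unfold tl
  rw [Finset.mul_sum]
  refine Finset.sum_le_sum fun q hq => ?_
  unfold PT at hq
  rw [Finset.mem_filter, Nat.mem_primesLE] at hq
  obtain ⟨w0, w2⟩ := wt_bound hq.1.2
  rw [hX, abs_le]
  split_ifs <;> constructor <;> linarith

lemma cnt_union {S T U : ℕ → Prop} {x : ℕ} (h : ∀ p, p.Prime → p ≤ x → S p → T p ∨ U p) :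
    cnt S x ≤ cnt T x + cnt U x := by
  classical
  rw [cnt_eq, cnt_eq, cnt_eq]
  refine le_trans (Finset.card_le_card ?_) (Finset.card_union_le _ _)
  intro p hp
  rw [Finset.mem_filter] at hp
  rw [Finset.mem_union, Finset.mem_filter, Finset.mem_filter]
  have := Nat.mem_primesLE.1 hp.1
  rcases h p this.2 this.1 hp.2 with h | h
  · exact Or.inl ⟨hp.1, h⟩
  · exact Or.inr ⟨hp.1, h⟩

lemma cnt_small (p0 x : ℕ) : cnt (fun p => p < p0) x ≤ p0 := by
  classical
  rw [cnt_eq]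
  refine le_trans (Finset.card_le_card (t := Finset.range p0) ?_) (by simp)
  intro p hp
  rw [Finset.mem_filter] at hp
  exact Finset.mem_range.2 hp.2

lemma log_small (l : ℕ) (ε : ℝ) (hε : 0 < ε) : ∃ p0 : ℕ, l < p0 ∧ ∀ p ≥ p0,
    |Real.log ((p - l : ℕ) : ℝ) - Real.log ((p + l : ℕ) : ℝ)| < ε := by
  have h1 : Tendsto (fun p : ℕ => ((p : ℝ) - l) / (p + l)) atTop (𝓝 1) := by
    have h2 : Tendsto (fun p : ℕ => 1 - (2 * (l : ℝ)) / ((p : ℝ) + l)) atTop (𝓝 (1 - 0)) := by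
      refine tendsto_const_nhds.sub (Tendsto.div_atTop tendsto_const_nhds ?_)
      exact tendsto_atTop_add_const_right _ _ tendsto_natCast_atTop_atTop
    rw [sub_zero] at h2
    refine h2.congr' ?_
    filter_upwards [eventually_ge_atTop 1] with p hp
    have : (0 : ℝ) < p + l := by
      have : (1 : ℝ) ≤ p := by exact_mod_cast hp
      positivity
    field_simp; ring
  have h3 := (Real.continuousAt_log one_ne_zero).tendsto.comp h1
  rw [Real.log_one] at h3
  have h4 := h3.abs
  rw [abs_zero] at h4
  obtain ⟨p0, hp0⟩ := eventually_atTop.1 (h4.eventually (gt_mem_nhds hε))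
  refine ⟨max p0 (l + 1), by have := le_max_right p0 (l + 1); omega, fun p hp => ?_⟩
  have hp1 : p0 ≤ p := (le_max_left _ _).trans hp
  have hp2 : l + 1 ≤ p := (le_max_right _ _).trans hp
  have h5 := hp0 p hp1
  simp only [Function.comp] at h5
  have h6 : (0 : ℝ) < (p : ℝ) - l := by
    have : ((l + 1 : ℕ) : ℝ) ≤ p := by exact_mod_cast hp2
    push_cast at this; linarith
  have h7 : (0 : ℝ) < (p : ℝ) + l := by
    have : (0 : ℝ) ≤ l := by positivity
    linarith
  rw [Real.log_div h6.ne' h7.ne'] at h5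
  rw [Nat.cast_sub (by omega)]
  push_cast
  exact h5

lemma cnt_tail {l y x : ℕ} {η : ℝ} :
    (cnt (fun p => l < p ∧ η ≤ tl l y x p) x : ℝ) * η ≤
      ∑ p ∈ (Nat.primesLE x).filter (fun p => l < p), tl l y x p := by
  classical
  rw [cnt_eq, ← nsmul_eq_mul]
  refine le_trans (Finset.card_nsmul_le_sum _ (fun p => tl l y x p) η ?_) ?_
  · intro p hp
    exact (Finset.mem_filter.1 hp).2.2
  · refine Finset.sum_le_sum_of_subset_of_nonneg ?_ ?_
    · intro p hp
      rw [Finset.mem_filter] at *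
      exact ⟨hp.1, hp.2.1⟩
    · intro p _ _
      unfold tl
      refine Finset.sum_nonneg fun q _ => mul_nonneg (by positivity) ?_
      split_ifs <;> norm_num

lemma final (l : ℕ) (hl : 0 < l) :
    Tendsto (fun x : ℕ => (cnt (fun p : ℕ => l < p ∧ (p + l).totient < (p - l).totient) x : ℝ) /
      Nat.primeCounting x) atTop (𝓝 (1 / 2)) := by
  rw [Metric.tendsto_atTop']
  intro δ4 hδ4
  obtain ⟨δ, hδ, rfl⟩ : ∃ δ : ℝ, 0 < δ ∧ δ4 = 5 * δ := ⟨δ4 / 5, by positivity, by ring⟩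
  obtain ⟨z, ε, hε, hz⟩ := dens_main l hl δ hδ
  obtain ⟨y0, hy0⟩ := tail_sum l hl (δ * (ε / 4)) (by positivity)
  obtain ⟨p0, hlp0, hp0⟩ := log_small l (ε / 2) (by positivity)
  set y := max z y0 with hy
  have H1 := hz y (le_max_left _ _)
  have H2 := hy0 y (le_max_right _ _)
  have hpiT : Tendsto (fun x : ℕ => (Nat.primeCounting x : ℝ)) atTop atTop := pi_atTop
  have H3 := hpiT.eventually_ge_atTop ((p0 + 1) / δ)
  suffices h : ∀ᶠ x : ℕ in atTop, dist ((cnt (fun p : ℕ => l < p ∧ (p + l).totient < (p - l).totient) x : ℝ) /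
      Nat.primeCounting x) (1 / 2) < 5 * δ by
    obtain ⟨N, hN⟩ := eventually_atTop.1 h
    exact ⟨N, fun n hn => hN n hn.le⟩
  filter_upwards [H1, H2, H3, eventually_ge_atTop y] with x h1 h2 h3 hxy
  obtain ⟨h1a, h1b⟩ := h1
  set c := (Nat.primeCounting x : ℝ) with hc
  have hcpos : 0 < c := lt_of_lt_of_le (by positivity) h3
  have hp0c : (p0 : ℝ) ≤ δ * c := by
    rw [div_le_iff₀ hδ] at h3; linarith
  have h4 : (cnt (fun p => l < p ∧ ε / 4 ≤ tl l y x p) x : ℝ) ≤ δ * c := by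
    have := (cnt_tail (l := l) (y := y) (x := x) (η := ε / 4)).trans h2
    have h5 : (cnt (fun p => l < p ∧ ε / 4 ≤ tl l y x p) x : ℝ) * (ε / 4) ≤ (δ * c) * (ε / 4) := by
      linarith
    exact le_of_mul_le_mul_right h5 (by positivity)
  have key : ∀ p : ℕ, p.Prime → p ≤ x → ¬ p < p0 → ¬ |DD l (PP l y) (p : ℤ)| ≤ ε →
      ¬ (l < p ∧ ε / 4 ≤ tl l y x p) →
      ((l < p ∧ (p + l).totient < (p - l).totient) ↔ 0 < DD l (PP l y) (p : ℤ)) := by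
    intro p _ hpx k1 k2 k3
    have hlp : l < p := by omega
    have k4 : tl l y x p < ε / 4 := by
      by_contra hh
      exact k3 ⟨hlp, not_lt.1 hh⟩
    have k5 := hp0 p (by omega)
    have k6 := main_diff (l := l) (y := y) hlp hpx (by omega)
    have t1 : (0 : ℝ) < (p + l).totient := by
      exact_mod_cast Nat.totient_pos.2 (by omega)
    have t2 : (0 : ℝ) < (p - l).totient := by
      exact_mod_cast Nat.totient_pos.2 (by omega)
    have k7 : (p + l).totient < (p - l).totient ↔
        0 < Real.log ((p - l).totient : ℝ) - Real.log ((p + l).totient : ℝ) := by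
      rw [sub_pos, Real.log_lt_log_iff t1 t2]
      norm_cast
    rw [k7]
    rw [abs_le] at k6
    rw [abs_lt] at k5
    push Not at k2
    rw [lt_abs] at k2
    constructor
    · rintro ⟨_, h⟩
      rcases k2 with k2 | k2
      · linarith
      · linarith [k6.1, k6.2, k5.1, k5.2]
    · intro h
      refine ⟨hlp, ?_⟩
      rcases k2 with k2 | k2
      · linarith [k6.1, k6.2, k5.1, k5.2]
      · linarith
  set a := cnt (fun p : ℕ => l < p ∧ (p + l).totient < (p - l).totient) x with ha
  set b := cnt (fun p : ℕ => 0 < DD l (PP l y) (p : ℤ)) x with hb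
  set d1 := cnt (fun p => p < p0) x with hd1
  set d2 := cnt (fun p : ℕ => |DD l (PP l y) (p : ℤ)| ≤ ε) x with hd2
  set d3 := cnt (fun p => l < p ∧ ε / 4 ≤ tl l y x p) x with hd3
  set E : ℕ → Prop := fun p => p < p0 ∨ |DD l (PP l y) (p : ℤ)| ≤ ε ∨ (l < p ∧ ε / 4 ≤ tl l y x p) with hE
  have u1 : cnt E x ≤ d1 + (d2 + d3) := by
    refine (cnt_union (T := fun p => p < p0)
      (U := fun p : ℕ => |DD l (PP l y) (p : ℤ)| ≤ ε ∨ (l < p ∧ ε / 4 ≤ tl l y x p)) ?_).trans ?_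
    · intro p _ _ h; exact h
    · refine Nat.add_le_add_left (cnt_union ?_) _
      intro p _ _ h; exact h
  have u2 : a ≤ b + cnt E x := by
    refine cnt_union ?_
    intro p hp hpx h
    by_cases hh : E p
    · exact Or.inr hh
    · left
      simp only [hE, not_or] at hh
      exact (key p hp hpx hh.1 hh.2.1 hh.2.2).1 h
  have u3 : b ≤ a + cnt E x := by
    refine cnt_union ?_
    intro p hp hpx h
    by_cases hh : E p
    · exact Or.inr hh
    · left
      simp only [hE, not_or] at hh
      exact (key p hp hpx hh.1 hh.2.1 hh.2.2).2 h
  have u4 : (d1 : ℝ) ≤ p0 := by exact_mod_cast cnt_small p0 x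
  have u1' : (cnt E x : ℝ) ≤ d1 + (d2 + d3) := by exact_mod_cast u1
  have u2' : (a : ℝ) ≤ b + cnt E x := by exact_mod_cast u2
  have u3' : (b : ℝ) ≤ a + cnt E x := by exact_mod_cast u3
  have u5 : (cnt E x : ℝ) ≤ 3 * (δ * c) := by linarith
  have u6 : |(a : ℝ) / c - b / c| ≤ 3 * δ := by
    rw [← sub_div, abs_div, abs_of_pos hcpos, div_le_iff₀ hcpos, abs_le]
    constructor <;> linarith
  rw [Real.dist_eq]
  have e : (a : ℝ) / c - 1 / 2 = ((a : ℝ) / c - b / c) + (b / c - 1 / 2) := by ring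
  rw [e]
  refine lt_of_le_of_lt (abs_add_le _ _) ?_
  linarith

end PhiDiff

theorem phi_diff_positive_density (ℓ : ℕ) (hℓ : 0 < ℓ) :
    Tendsto (fun x : ℕ =>
      ({p : ℕ | p.Prime ∧ p ≤ x ∧ ℓ < p ∧
          Nat.totient (p + ℓ) < Nat.totient (p - ℓ)}.ncard : ℝ) /
        (Nat.primeCounting x : ℝ)) atTop (𝓝 (1 / 2)) := by
  classical
  refine (PhiDiff.final ℓ hℓ).congr fun x => ?_
  congr 2
  rw [PhiDiff.cnt_eq, ← Set.ncard_coe_finset]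
  congr 1
  ext p
  simp only [Finset.coe_filter, Nat.mem_primesLE, Set.mem_ofPred_eq]
  tauto
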